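/- arXiv:2509.20330 — 3 statements merged into one kernel-verified Lean document; each statement's English description precedes it below -/
import Mathlib

section
/- Let t0 < tf be real numbers. Suppose we are given continuous functions on [t0,tf]: a scalar Lbar(t), vectors Lbar_x(t) ∈ ℝ^14, Lbar_we(t), Lbar_wp(t) ∈ ℝ^4, symmetric matrices Lbar_xx(t) ∈ ℝ^{14×14} and Lbar_wewe(t), Lbar_wpwp(t) ∈ ℝ^{4×4}, a vector Fbar(t) ∈ ℝ^14, and matrices Fbar_x(t) ∈ ℝ^{14×14}, Fbar_we(t), Fbar_wp(t) ∈ ℝ^{14×4}. For a regularization parameter λ ≥ 0, consider the backward system of ODEs on [t0,tf] in the unknowns (Vbar(t) ∈ ℝ, Vbar_x(t) ∈ ℝ^14, Vbar_xx(t) ∈ ℝ^{14×14} symmetric): with Qbar_x = Fbar_x^T Vbar_x + Lbar_x, Qbar_we = Fbar_we^T Vbar_x + Lbar_we, Qbar_wp = Fbar_wp^T Vbar_x + Lbar_wp, Qbar_xx = Lbar_xx + Vbar_xx Fbar_x + Fbar_x^T Vbar_xx, Qbar_wewe = Lbar_wewe + λI_4, Qbar_wpwp = Lbar_wpwp + λI_4,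 Qbar_wex = Fbar_we^T Vbar_xx, Qbar_wpx = Fbar_wp^T Vbar_xx, and gains ℓ_we = −Qbar_wewe^{-1} Qbar_we, K_we = −Qbar_wewe^{-1} Qbar_wex, ℓ_wp = −Qbar_wpwp^{-1} Qbar_wp, K_wp = −Qbar_wpwp^{-1} Qbar_wpx, the equations are: −dVbar/dt = Lbar + ℓ_we^T Qbar_we + ℓ_wp^T Qbar_wp + (1/2)ℓ_we^T Qbar_wewe ℓ_we + (1/2)ℓ_wp^T Qbar_wpwp ℓ_wp; −dVbar_x/dt = Qbar_x + K_we^T Qbar_we + K_wp^T Qbar_wp + Qbar_wex^T ℓ_we + Qbar_wpx^T ℓ_wp + K_we^T Qbar_wewe ℓ_we + K_wp^T Qbar_wpwp ℓ_wp; −dVbar_xx/dt = K_we^T Qbar_wex + Qbar_wex^T K_we + K_wp^T Qbar_wpx + Qbar_wpx^T K_wp + K_we^T Qbar_wewe K_we + K_wp^T Qbar_wpwp K_wp + Qbar_xx; with prescribed terminal conditions Vbar(tf) = v_f ∈ ℝ, Vbar_x(tf) = g_f ∈ ℝ^14, Vbar_xx(tf) = H_f ∈ ℝ^{14×14} symmetric.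 Then there exists λ* ≥ 0 such that for every λ ≥ λ*, this terminal-value problem admits a unique solution defined on all of [t0,tf], and this solution is bounded on [t0,tf]. -/
/-!
Write `A` for the inverse of a regularized control Hessian `Q = L + λI`. As soon as `Q` is
invertible, `Q A = 1` collapses the gain terms of each player, and on symmetric Hessians `P = V̄ₓₓ`
the backward equations become a Riccati system (`ddpBackwardRHS_eq_riccatiRHS`)

* `-V' = L̄ - ½ ∑ q ⬝ A q`,
* `-Vₓ' = Fₓᵀ Vₓ + Lₓ - ∑ P F A q`,
* `-P' = Lₓₓ + P Fₓ + Fₓᵀ P - ∑ P F A Fᵀ P`,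

where `q = Fᵀ Vₓ + L_w` and the sums run over the two players. All superlinear terms carry a factor
`A`, and a Neumann series argument gives `‖A‖ ≤ 1 / (λ - sup ‖L‖)`
(`exists_small_regularized_inverse`). So for large `λ` the system is a small perturbation of an
affine one.

The analytic core is `exists_unique_solution_of_small_perturbation`. The affine growth bound
`M ‖z‖ + M` and Grönwall's inequality give a radius `R`, independent of the perturbation, that
confines every trajectory with growth at most `M ‖z‖ + (M + 1)`. A perturbation which costs at most
`1` on the ball of radius `R` satisfies this bound there. Composing the field with a Lipschitz
retraction onto that ball makes it bounded and globally Lipschitz, so that a single application of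
Picard–Lindelöf covers the whole interval; the Grönwall bound shows that the solution never meets
the cutoff. Uniqueness is the local Lipschitz statement on a ball containing both solutions.

Symmetry of `P` is obtained by substituting the symmetric part of `P` into the field: the `P`-field
is then symmetric-valued, so `P - Pᵀ` has zero derivative and vanishes at the terminal time.
-/

open Matrix Set

/-- The right-hand sides (for −dV̄/dt, −dV̄ₓ/dt, −dV̄ₓₓ/dt) of the regularized backward
differential equations of game-theoretic differential dynamic programming, as functions
of the coefficient data (running cost expansion L̄ and dynamics expansion F̄ along the
nominal trajectory), the regularization parameter λ, and the current values of the
value-function expansion (V̄ₓ, V̄ₓₓ). -/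
noncomputable def ddpBackwardRHS
    (Lb : ℝ) (Lx : Fin 14 → ℝ) (Lwe Lwp : Fin 4 → ℝ)
    (Lxx : Matrix (Fin 14) (Fin 14) ℝ) (Lwewe Lwpwp : Matrix (Fin 4) (Fin 4) ℝ)
    (Fx : Matrix (Fin 14) (Fin 14) ℝ) (Fwe Fwp : Matrix (Fin 14) (Fin 4) ℝ)
    (lam : ℝ) (Vx : Fin 14 → ℝ) (Vxx : Matrix (Fin 14) (Fin 14) ℝ) :
    ℝ × (Fin 14 → ℝ) × Matrix (Fin 14) (Fin 14) ℝ :=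
  let Qx : Fin 14 → ℝ := Fxᵀ *ᵥ Vx + Lx
  let Qwe : Fin 4 → ℝ := Fweᵀ *ᵥ Vx + Lwe
  let Qwp : Fin 4 → ℝ := Fwpᵀ *ᵥ Vx + Lwp
  let Qxx : Matrix (Fin 14) (Fin 14) ℝ := Lxx + Vxx * Fx + Fxᵀ * Vxx
  let Qwewe : Matrix (Fin 4) (Fin 4) ℝ := Lwewe + lam • (1 : Matrix (Fin 4) (Fin 4) ℝ)
  let Qwpwp : Matrix (Fin 4) (Fin 4) ℝ := Lwpwp + lam • (1 : Matrix (Fin 4) (Fin 4) ℝ)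
  let Qwex : Matrix (Fin 4) (Fin 14) ℝ := Fweᵀ * Vxx
  let Qwpx : Matrix (Fin 4) (Fin 14) ℝ := Fwpᵀ * Vxx
  let le : Fin 4 → ℝ := -(Qwewe⁻¹ *ᵥ Qwe)
  let Kwe : Matrix (Fin 4) (Fin 14) ℝ := -(Qwewe⁻¹ * Qwex)
  let lp : Fin 4 → ℝ := -(Qwpwp⁻¹ *ᵥ Qwp)
  let Kwp : Matrix (Fin 4) (Fin 14) ℝ := -(Qwpwp⁻¹ * Qwpx)
  ( Lb + le ⬝ᵥ Qwe + lp ⬝ᵥ Qwp + (1 / 2) * (le ⬝ᵥ Qwewe *ᵥ le)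
      + (1 / 2) * (lp ⬝ᵥ Qwpwp *ᵥ lp),
    Qx + Kweᵀ *ᵥ Qwe + Kwpᵀ *ᵥ Qwp + Qwexᵀ *ᵥ le + Qwpxᵀ *ᵥ lp
      + Kweᵀ *ᵥ (Qwewe *ᵥ le) + Kwpᵀ *ᵥ (Qwpwp *ᵥ lp),
    Kweᵀ * Qwex + Qwexᵀ * Kwe + Kwpᵀ * Qwpx + Qwpxᵀ * Kwp
      + Kweᵀ * Qwewe * Kwe + Kwpᵀ * Qwpwp * Kwp + Qxx )

/-- The triple (V̄, V̄ₓ, V̄ₓₓ) is a (symmetric-valued) solution of the regularized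
backward DDP equations on [t0,tf] with the prescribed terminal conditions. -/
def IsDDPBackwardSol (t0 tf : ℝ)
    (Lb : ℝ → ℝ) (Lx : ℝ → Fin 14 → ℝ) (Lwe Lwp : ℝ → Fin 4 → ℝ)
    (Lxx : ℝ → Matrix (Fin 14) (Fin 14) ℝ) (Lwewe Lwpwp : ℝ → Matrix (Fin 4) (Fin 4) ℝ)
    (Fx : ℝ → Matrix (Fin 14) (Fin 14) ℝ) (Fwe Fwp : ℝ → Matrix (Fin 14) (Fin 4) ℝ)
    (lam : ℝ) (vf : ℝ) (gf : Fin 14 → ℝ) (Hf : Matrix (Fin 14) (Fin 14) ℝ)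
    (V : ℝ → ℝ) (Vx : ℝ → Fin 14 → ℝ) (Vxx : ℝ → Matrix (Fin 14) (Fin 14) ℝ) : Prop :=
  V tf = vf ∧ Vx tf = gf ∧ Vxx tf = Hf ∧
  (∀ t ∈ Set.Icc t0 tf, (Vxx t)ᵀ = Vxx t) ∧
  (∀ t ∈ Set.Icc t0 tf,
    HasDerivWithinAt V
      (-(ddpBackwardRHS (Lb t) (Lx t) (Lwe t) (Lwp t) (Lxx t) (Lwewe t) (Lwpwp t)
          (Fx t) (Fwe t) (Fwp t) lam (Vx t) (Vxx t)).1) (Set.Icc t0 tf) t ∧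
    HasDerivWithinAt Vx
      (-(ddpBackwardRHS (Lb t) (Lx t) (Lwe t) (Lwp t) (Lxx t) (Lwewe t) (Lwpwp t)
          (Fx t) (Fwe t) (Fwp t) lam (Vx t) (Vxx t)).2.1) (Set.Icc t0 tf) t ∧
    (∀ i j, HasDerivWithinAt (fun r => Vxx r i j)
      (-((ddpBackwardRHS (Lb t) (Lx t) (Lwe t) (Lwp t) (Lxx t) (Lwewe t) (Lwpwp t)
          (Fx t) (Fwe t) (Fwp t) lam (Vx t) (Vxx t)).2.2 i j)) (Set.Icc t0 tf) t))

open scoped NNReal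

/-! ### Terminal-value problems close to affine ones -/

section Abstract

variable {E : Type*} [NormedAddCommGroup E] [NormedSpace ℝ E]

/-- The radial retraction of a normed space onto the closed ball of radius `R` (meant for
`0 < R`). -/
noncomputable def radialRetract (R : ℝ) (z : E) : E := (max 1 (‖z‖ / R))⁻¹ • z

lemma radialRetract_of_norm_le {R : ℝ} (hR : 0 < R) {z : E} (hz : ‖z‖ ≤ R) :
    radialRetract R z = z := by
  have : ‖z‖ / R ≤ 1 := (div_le_one hR).2 hz
  simp [radialRetract, max_eq_left this]

lemma norm_radialRetract_le_norm (R : ℝ) (z : E) : ‖radialRetract R z‖ ≤ ‖z‖ := by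
  have h1 : (1 : ℝ) ≤ max 1 (‖z‖ / R) := le_max_left _ _
  rw [radialRetract, norm_smul, norm_inv, Real.norm_of_nonneg (by linarith)]
  exact mul_le_of_le_one_left (norm_nonneg _) (inv_le_one_of_one_le₀ h1)

lemma norm_radialRetract_le {R : ℝ} (hR : 0 < R) (z : E) : ‖radialRetract R z‖ ≤ R := by
  have h1 : (1 : ℝ) ≤ max 1 (‖z‖ / R) := le_max_left _ _
  have h2 : ‖z‖ / R ≤ max 1 (‖z‖ / R) := le_max_right _ _
  rw [radialRetract, norm_smul, norm_inv, Real.norm_of_nonneg (by linarith),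
    inv_mul_le_iff₀ (by linarith)]
  rwa [div_le_iff₀ hR] at h2

lemma lipschitzWith_radialRetract {R : ℝ} (hR : 0 < R) :
    LipschitzWith 2 (radialRetract R : E → E) := by
  refine LipschitzWith.of_dist_le_mul fun x y => ?_
  set g : E → ℝ := fun z => max 1 (‖z‖ / R) with hg
  have g1 : ∀ z, 1 ≤ g z := fun z => le_max_left _ _
  have gz : ∀ z, ‖z‖ / R ≤ g z := fun z => le_max_right _ _
  have gl : |g y - g x| ≤ ‖x - y‖ / R := by
    have h := abs_max_sub_max_le_abs (‖y‖ / R) (‖x‖ / R) 1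
    rw [max_comm, max_comm (‖x‖ / R)] at h
    refine h.trans ?_
    rw [← sub_div, abs_div, abs_of_pos hR]
    gcongr
    rw [norm_sub_rev x y]
    exact abs_norm_sub_norm_le y x
  have gx := g1 x
  have gy := g1 y
  have e : radialRetract R x - radialRetract R y
      = (g x)⁻¹ • (x - y) + ((g y - g x) * (g x)⁻¹) • radialRetract R y := by
    have hx : g x ≠ 0 := by linarith
    have hy : g y ≠ 0 := by linarith
    have h : (g y - g x) * (g x)⁻¹ * (g y)⁻¹ = (g x)⁻¹ - (g y)⁻¹ := by
      field_simp
    change (g x)⁻¹ • x - (g y)⁻¹ • y = _ + _ • (g y)⁻¹ • y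
    rw [smul_smul, h]
    module
  have ix : (g x)⁻¹ ≤ 1 := inv_le_one_of_one_le₀ gx
  have ix0 : 0 ≤ (g x)⁻¹ := by positivity
  rw [dist_eq_norm, dist_eq_norm, e]
  calc _ ≤ ‖(g x)⁻¹ • (x - y)‖ + ‖((g y - g x) * (g x)⁻¹) • radialRetract R y‖ := norm_add_le _ _
    _ ≤ 1 * ‖x - y‖ + ((‖x - y‖ / R) * 1) * R := by
        rw [norm_smul, norm_smul, norm_mul, Real.norm_eq_abs, Real.norm_eq_abs, abs_of_nonneg ix0]
        have := norm_radialRetract_le hR y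
        gcongr
    _ = ((2 : ℝ≥0) : ℝ) * ‖x - y‖ := by
        push_cast
        field_simp
        ring

/-- A bounded, globally Lipschitz field has a solution on the whole of `[a, b]`: the a priori bound
`L` lets the Picard–Lindelöf ball have radius `L * (b - a)`. -/
lemma exists_solution_of_bounded_lipschitz [CompleteSpace E] {a b : ℝ} (hab : a ≤ b)
    (f : ℝ → E → E) (z₀ : E) (K L : ℝ≥0)
    (hK : ∀ t ∈ Icc a b, LipschitzWith K (f t))
    (hc : ∀ z, ContinuousOn (fun t => f t z) (Icc a b))
    (hL : ∀ t ∈ Icc a b, ∀ z, ‖f t z‖ ≤ L) :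
    ∃ z : ℝ → E, z b = z₀ ∧ ∀ t ∈ Icc a b, HasDerivWithinAt z (f t (z t)) (Icc a b) t := by
  have h : IsPicardLindelof f (⟨b, right_mem_Icc.2 hab⟩ : Icc a b) z₀
      (L * (b - a).toNNReal) 0 L K :=
    { lipschitzOnWith := fun t ht => (hK t ht).lipschitzOnWith
      continuousOn := fun z _ => hc z
      norm_le := fun t ht z _ => hL t ht z
      mul_max_le := by
        simp [hab] }
  exact h.exists_eq_forall_mem_Icc_hasDerivWithinAt₀

/-- Grönwall's inequality run backward from the right endpoint, by the substitution `t ↦ -t`. -/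
lemma norm_le_gronwallBound_backward {a b : ℝ} {z z' : ℝ → E} {K ε : ℝ}
    (hz : ∀ t ∈ Icc a b, HasDerivWithinAt z (z' t) (Icc a b) t)
    (bound : ∀ t ∈ Icc a b, ‖z' t‖ ≤ K * ‖z t‖ + ε) :
    ∀ t ∈ Icc a b, ‖z t‖ ≤ gronwallBound ‖z b‖ K ε (b - t) := by
  have hm : ∀ s ∈ Icc (-b) (-a), -s ∈ Icc a b := fun s hs => ⟨by linarith [hs.2], by linarith [hs.1]⟩
  have hd : ∀ s ∈ Icc (-b) (-a),
      HasDerivWithinAt (fun s => z (-s)) (-z' (-s)) (Icc (-b) (-a)) s := by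
    intro s hs
    have := (hz (-s) (hm s hs)).scomp s ((hasDerivAt_neg s).hasDerivWithinAt) hm
    simpa [Function.comp_def] using this
  intro t ht
  have := norm_le_gronwallBound_of_norm_deriv_right_le (f := fun s => z (-s))
    (f' := fun s => -z' (-s)) (δ := ‖z b‖) (K := K) (ε := ε) (a := -b) (b := -a)
    (fun s hs => (hd s hs).continuousWithinAt)
    (fun s hs => ((hd s (Ico_subset_Icc_self hs)).mono_of_mem_nhdsWithin
      (Icc_mem_nhdsGE_of_mem hs)))
    (by simp)
    (fun s hs => by simpa using bound (-s) (hm s (Ico_subset_Icc_self hs)))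
    (-t) ⟨by linarith [ht.2], by linarith [ht.1]⟩
  simpa [add_comm, sub_eq_add_neg] using this

lemma lipschitzOnWith_closedBall_of_contDiff {X Y : Type*}
    [NormedAddCommGroup X] [NormedSpace ℝ X] [ProperSpace X]
    [NormedAddCommGroup Y] [NormedSpace ℝ Y] {G : X → Y} (hG : ContDiff ℝ 1 G) (r : ℝ) :
    ∃ K : ℝ≥0, LipschitzOnWith K G (Metric.closedBall 0 r) :=
  hG.contDiffOn.exists_lipschitzOnWith one_ne_zero (convex_closedBall _ _)
    (isCompact_closedBall _ _)

/-- Affine-in-`z` functions depending continuously on a bounded parameter grow at most linearly,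
uniformly in the parameter. -/
lemma exists_linear_growth {C : Type*} [NormedAddCommGroup C] [NormedSpace ℝ C] [ProperSpace C]
    [ProperSpace E] {H : C × E → E} (hH : Continuous H)
    (haff : ∀ c (s : ℝ) z, H (c, s • z) = s • H (c, z) + (1 - s) • H (c, 0)) (r : ℝ) :
    ∃ M : ℝ, 0 ≤ M ∧ ∀ c, ‖c‖ ≤ r → ∀ z, ‖H (c, z)‖ ≤ M * ‖z‖ + M := by
  obtain ⟨B, hB⟩ := ((isCompact_closedBall (0 : C) r).prod
    (isCompact_closedBall (0 : E) 1)).exists_bound_of_continuousOn hH.continuousOn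
  refine ⟨2 * |B|, by positivity, fun c hc z => ?_⟩
  have hb : ∀ y : E, ‖y‖ ≤ 1 → ‖H (c, y)‖ ≤ |B| := fun y hy =>
    (hB (c, y) ⟨by simpa using hc, by simpa using hy⟩).trans (le_abs_self B)
  have h0 := hb 0 (by simp)
  rcases eq_or_ne z 0 with rfl | hz
  · simp; linarith [abs_nonneg B]
  -- `z` is the multiple by `‖z‖` of a unit vector, where compactness gives the bound
  have hz' : ‖z‖ ≠ 0 := norm_ne_zero_iff.2 hz
  have h1 := hb (‖z‖⁻¹ • z) (by simp [norm_smul, hz'])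
  have e := haff c ‖z‖ (‖z‖⁻¹ • z)
  rw [smul_smul, mul_inv_cancel₀ hz', one_smul] at e
  rw [e]
  calc _ ≤ ‖z‖ * ‖H (c, ‖z‖⁻¹ • z)‖ + |1 - ‖z‖| * ‖H (c, 0)‖ := by
        refine (norm_add_le _ _).trans ?_
        rw [norm_smul, norm_smul, norm_norm, Real.norm_eq_abs]
    _ ≤ ‖z‖ * |B| + (1 + ‖z‖) * |B| := by
        have : |1 - ‖z‖| ≤ 1 + ‖z‖ := by
          rw [abs_le]; constructor <;> linarith [norm_nonneg z]
        gcongr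
    _ ≤ _ := by nlinarith [abs_nonneg B, norm_nonneg z]

/-- If `G (c, 0, ·)` is affine, then the backward problem for `z' = G (c t, d t, z)` is uniquely and
boundedly solvable on `[a, b]` for every sufficiently small `d`, with a threshold depending on `c`,
the interval and the terminal value only. -/
theorem exists_unique_solution_of_small_perturbation
    {C D : Type*} [NormedAddCommGroup C] [NormedSpace ℝ C] [ProperSpace C]
    [NormedAddCommGroup D] [NormedSpace ℝ D] [ProperSpace D] [ProperSpace E]
    {G : C × D × E → E} (hG : ContDiff ℝ 1 G)
    (haff : ∀ c (s : ℝ) z, G (c, 0, s • z) = s • G (c, 0, z) + (1 - s) • G (c, 0, 0))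
    {a b : ℝ} (hab : a ≤ b) {c : ℝ → C} (hc : ContinuousOn c (Icc a b)) (z₀ : E) :
    ∃ ε > (0 : ℝ), ∀ d : ℝ → D, ContinuousOn d (Icc a b) → (∀ t ∈ Icc a b, ‖d t‖ ≤ ε) →
      ∃ z : ℝ → E, z b = z₀ ∧
        (∀ t ∈ Icc a b, HasDerivWithinAt z (G (c t, d t, z t)) (Icc a b) t) ∧
        (∃ R : ℝ, ∀ t ∈ Icc a b, ‖z t‖ ≤ R) ∧
        ∀ w : ℝ → E, w b = z₀ →
          (∀ t ∈ Icc a b, HasDerivWithinAt w (G (c t, d t, w t)) (Icc a b) t) →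
          ∀ t ∈ Icc a b, w t = z t := by
  obtain ⟨r, hr⟩ := isCompact_Icc.exists_bound_of_continuousOn hc
  obtain ⟨M, hM0, hM⟩ := exists_linear_growth (H := fun p : C × E => G (p.1, 0, p.2))
    (hG.continuous.comp (by fun_prop)) haff r
  -- the growth constant `M + 1` leaves room for a perturbation of size `1`
  set R : ℝ := gronwallBound ‖z₀‖ M (M + 1) (b - a) + 1 with hRdef
  have hmono := gronwallBound_mono (norm_nonneg z₀) (by linarith : 0 ≤ M + 1) hM0
  have hR : 0 < R := by
    have := hmono (sub_nonneg.2 hab)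
    rw [gronwallBound_x0] at this
    linarith [norm_nonneg z₀]
  have hlip : ∀ ρ : ℝ, ∃ K : ℝ≥0, LipschitzOnWith K G
      {p | ‖p.1‖ ≤ r ∧ ‖p.2.1‖ ≤ 1 ∧ ‖p.2.2‖ ≤ ρ} := by
    intro ρ
    obtain ⟨K, hK⟩ := lipschitzOnWith_closedBall_of_contDiff hG (max r (max 1 ρ))
    refine ⟨K, hK.mono fun p hp => ?_⟩
    simp only [mem_closedBall_zero_iff, Prod.norm_def]
    exact max_le_max hp.1 (max_le_max hp.2.1 hp.2.2)
  obtain ⟨K, hK⟩ := hlip R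
  refine ⟨min 1 (1 / (K + 1)), by positivity, fun d hd hdε => ?_⟩
  have hd1 : ∀ t ∈ Icc a b, ‖d t‖ ≤ 1 := fun t ht => (hdε t ht).trans (min_le_left _ _)
  have hKd : ∀ t ∈ Icc a b, K * ‖d t‖ ≤ 1 := fun t ht => by
    have h := (hdε t ht).trans (min_le_right _ _)
    have hK1 : (0 : ℝ) < K + 1 := by positivity
    rw [le_div_iff₀ hK1] at h
    nlinarith [norm_nonneg (d t)]
  -- on the ball of radius `R` the perturbation costs at most `1`
  have hgrow : ∀ t ∈ Icc a b, ∀ z, ‖z‖ ≤ R → ‖G (c t, d t, z)‖ ≤ M * ‖z‖ + (M + 1) := by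
    intro t ht z hz
    have h1 := hK.dist_le_mul (c t, d t, z) ⟨hr t ht, hd1 t ht, hz⟩ (c t, 0, z)
      ⟨hr t ht, by simp, hz⟩
    have h2 : dist (c t, d t, z) (c t, (0 : D), z) = ‖d t‖ := by
      simp [Prod.dist_eq]
    rw [h2, dist_eq_norm] at h1
    have h3 := hM (c t) (hr t ht) z
    have h4 := norm_le_norm_add_norm_sub' (G (c t, d t, z)) (G (c t, 0, z))
    have := hKd t ht
    simp only at h3
    linarith
  have hliz : ∀ (ρ : ℝ) (K : ℝ≥0), LipschitzOnWith K G
      {p | ‖p.1‖ ≤ r ∧ ‖p.2.1‖ ≤ 1 ∧ ‖p.2.2‖ ≤ ρ} → ∀ t ∈ Icc a b,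
      LipschitzOnWith K (fun z => G (c t, d t, z)) {z | ‖z‖ ≤ ρ} := by
    intro ρ K hK t ht
    refine LipschitzOnWith.of_dist_le_mul fun x hx y hy => ?_
    have := hK.dist_le_mul (c t, d t, x) ⟨hr t ht, hd1 t ht, hx⟩ (c t, d t, y)
      ⟨hr t ht, hd1 t ht, hy⟩
    simpa [Prod.dist_eq] using this
  obtain ⟨z, hz0, hz⟩ := exists_solution_of_bounded_lipschitz hab
    (fun t z => G (c t, d t, radialRetract R z)) z₀ (K * 2) (M * R + (M + 1)).toNNReal
    (fun t ht => by
      have := (hliz R K hK t ht).comp (lipschitzWith_radialRetract (E := E) hR).lipschitzOnWith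
        (s := univ) (fun z _ => norm_radialRetract_le hR z)
      rwa [lipschitzOnWith_univ] at this)
    (fun z => hG.continuous.comp_continuousOn (by fun_prop))
    (fun t ht z => by
      rw [Real.coe_toNNReal _ (by positivity)]
      have h := norm_radialRetract_le hR z
      exact (hgrow t ht _ h).trans (by gcongr))
  have hzR : ∀ t ∈ Icc a b, ‖z t‖ ≤ R := by
    intro t ht
    have h := norm_le_gronwallBound_backward (K := M) (ε := M + 1) hz (fun t ht => by
      refine (hgrow t ht _ (norm_radialRetract_le hR _)).trans ?_
      have := norm_radialRetract_le_norm R (z t)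
      gcongr) t ht
    rw [hz0] at h
    have := hmono (by linarith [ht.1] : b - t ≤ b - a)
    linarith
  have hz' : ∀ t ∈ Icc a b, HasDerivWithinAt z (G (c t, d t, z t)) (Icc a b) t := by
    intro t ht
    simpa only [radialRetract_of_norm_le hR (hzR t ht)] using hz t ht
  refine ⟨z, hz0, hz', ⟨R, hzR⟩, fun w hw0 hw => ?_⟩
  have hwc : ContinuousOn w (Icc a b) := fun t ht => (hw t ht).continuousWithinAt
  obtain ⟨ρ, hρ⟩ := isCompact_Icc.exists_bound_of_continuousOn hwc
  obtain ⟨K', hK'⟩ := hlip (max R ρ)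
  refine ODE_solution_unique_of_mem_Icc_left (v := fun t z => G (c t, d t, z))
    (s := fun _ => {z | ‖z‖ ≤ max R ρ}) (K := K')
    (fun t ht => hliz _ K' hK' t (Ioc_subset_Icc_self ht)) hwc
    (fun t ht => ((hw t (Ioc_subset_Icc_self ht)).mono_of_mem_nhdsWithin
      (Icc_mem_nhdsLE_of_mem ht)))
    (fun t ht => (hρ t (Ioc_subset_Icc_self ht)).trans (le_max_right _ _))
    (fun t ht => (hz' t ht).continuousWithinAt)
    (fun t ht => ((hz' t (Ioc_subset_Icc_self ht)).mono_of_mem_nhdsWithin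
      (Icc_mem_nhdsLE_of_mem ht)))
    (fun t ht => (hzR t (Ioc_subset_Icc_self ht)).trans (le_max_left _ _))
    (hw0.trans hz0.symm)

end Abstract

/-! ### Reduction of the backward equations to Riccati form -/

section Algebra

/-- The symmetric part of a square matrix. -/
noncomputable def symPart (P : Matrix (Fin 14) (Fin 14) ℝ) : Matrix (Fin 14) (Fin 14) ℝ :=
  (1 / 2 : ℝ) • (P + Pᵀ)

/-- The Riccati form of the backward right-hand sides (for `-dV/dt`, `-dVₓ/dt`, `-dVₓₓ/dt`), where
`Ae` and `Ap` stand for the inverses of the regularized control Hessians. -/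
noncomputable def riccatiRHS
    (Lb : ℝ) (Lx : Fin 14 → ℝ) (Lwe Lwp : Fin 4 → ℝ)
    (Lxx : Matrix (Fin 14) (Fin 14) ℝ)
    (Fx : Matrix (Fin 14) (Fin 14) ℝ) (Fwe Fwp : Matrix (Fin 14) (Fin 4) ℝ)
    (Ae Ap : Matrix (Fin 4) (Fin 4) ℝ) (Vx : Fin 14 → ℝ) (P : Matrix (Fin 14) (Fin 14) ℝ) :
    ℝ × (Fin 14 → ℝ) × Matrix (Fin 14) (Fin 14) ℝ :=
  ( Lb - (1 / 2) * ((Fweᵀ *ᵥ Vx + Lwe) ⬝ᵥ (Ae *ᵥ (Fweᵀ *ᵥ Vx + Lwe)))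
      - (1 / 2) * ((Fwpᵀ *ᵥ Vx + Lwp) ⬝ᵥ (Ap *ᵥ (Fwpᵀ *ᵥ Vx + Lwp))),
    Fxᵀ *ᵥ Vx + Lx - P *ᵥ (Fwe *ᵥ (Ae *ᵥ (Fweᵀ *ᵥ Vx + Lwe)))
      - P *ᵥ (Fwp *ᵥ (Ap *ᵥ (Fwpᵀ *ᵥ Vx + Lwp))),
    Lxx + P * Fx + Fxᵀ * P - P * (Fwe * Ae * Fweᵀ) * P - P * (Fwp * Ap * Fwpᵀ) * P )

lemma symPart_of_symm {P : Matrix (Fin 14) (Fin 14) ℝ} (hP : Pᵀ = P) : symPart P = P := by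
  rw [symPart, hP, ← two_smul ℝ P, smul_smul]; norm_num

lemma symPart_transpose (P : Matrix (Fin 14) (Fin 14) ℝ) : (symPart P)ᵀ = symPart P := by
  rw [symPart, transpose_smul, transpose_add, transpose_transpose, add_comm]

section Gains

variable {n m : Type*} [Fintype n] [Fintype m] [DecidableEq m]
  (F : Matrix n m ℝ) {Q A : Matrix m m ℝ} (q : m → ℝ) {P : Matrix n n ℝ}

/-- One player's contribution to `-dV/dt`, with `A = Q⁻¹` and gain `-A q`. -/
lemma gain_value (h : Q * A = 1) :
    (-(A *ᵥ q)) ⬝ᵥ q + (1 / 2) * ((-(A *ᵥ q)) ⬝ᵥ Q *ᵥ (-(A *ᵥ q)))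
      = -((1 / 2) * (q ⬝ᵥ (A *ᵥ q))) := by
  have : Q *ᵥ (-(A *ᵥ q)) = -q := by rw [mulVec_neg, mulVec_mulVec, h, one_mulVec]
  rw [this, dotProduct_neg, neg_dotProduct, dotProduct_comm]
  ring

/-- One player's contribution to `-dVₓ/dt`: since `Q (-A q) = -q`, the two terms in which the feedback
gain is transposed cancel. -/
lemma gain_gradient (h : Q * A = 1) (hP : Pᵀ = P) :
    (-(A * (Fᵀ * P)))ᵀ *ᵥ q + (Fᵀ * P)ᵀ *ᵥ (-(A *ᵥ q))
      + (-(A * (Fᵀ * P)))ᵀ *ᵥ (Q *ᵥ (-(A *ᵥ q))) = -(P *ᵥ (F *ᵥ (A *ᵥ q))) := by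
  have : Q *ᵥ (-(A *ᵥ q)) = -q := by rw [mulVec_neg, mulVec_mulVec, h, one_mulVec]
  rw [this, mulVec_neg, mulVec_neg, transpose_mul Fᵀ P, hP, transpose_transpose,
    ← mulVec_mulVec]
  abel

/-- One player's contribution to `-dVₓₓ/dt`; the same cancellation as in `gain_gradient`. -/
lemma gain_hessian (h : Q * A = 1) (hP : Pᵀ = P) :
    (-(A * (Fᵀ * P)))ᵀ * (Fᵀ * P) + (Fᵀ * P)ᵀ * (-(A * (Fᵀ * P)))
      + (-(A * (Fᵀ * P)))ᵀ * Q * (-(A * (Fᵀ * P))) = -(P * (F * A * Fᵀ) * P) := by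
  have : Q * (-(A * (Fᵀ * P))) = -(Fᵀ * P) := by
    rw [Matrix.mul_neg, ← Matrix.mul_assoc, h, Matrix.one_mul]
  rw [Matrix.mul_assoc _ Q, this, Matrix.mul_neg, Matrix.mul_neg, transpose_mul Fᵀ P, hP,
    transpose_transpose]
  simp only [Matrix.mul_assoc]
  abel

end Gains

lemma ddpBackwardRHS_eq_riccatiRHS
    (Lb : ℝ) (Lx : Fin 14 → ℝ) (Lwe Lwp : Fin 4 → ℝ)
    (Lxx : Matrix (Fin 14) (Fin 14) ℝ) {Lwewe Lwpwp : Matrix (Fin 4) (Fin 4) ℝ}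
    (Fx : Matrix (Fin 14) (Fin 14) ℝ) (Fwe Fwp : Matrix (Fin 14) (Fin 4) ℝ)
    {lam : ℝ} (Vx : Fin 14 → ℝ) {P : Matrix (Fin 14) (Fin 14) ℝ} (hP : Pᵀ = P)
    (he : IsUnit (Lwewe + lam • (1 : Matrix (Fin 4) (Fin 4) ℝ)))
    (hp : IsUnit (Lwpwp + lam • (1 : Matrix (Fin 4) (Fin 4) ℝ))) :
    ddpBackwardRHS Lb Lx Lwe Lwp Lxx Lwewe Lwpwp Fx Fwe Fwp lam Vx P =
      riccatiRHS Lb Lx Lwe Lwp Lxx Fx Fwe Fwp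
        (Lwewe + lam • (1 : Matrix (Fin 4) (Fin 4) ℝ))⁻¹
        (Lwpwp + lam • (1 : Matrix (Fin 4) (Fin 4) ℝ))⁻¹ Vx P := by
  have he' := mul_nonsing_inv _ ((isUnit_iff_isUnit_det _).1 he)
  have hp' := mul_nonsing_inv _ ((isUnit_iff_isUnit_det _).1 hp)
  simp only [ddpBackwardRHS, riccatiRHS, Prod.mk.injEq]
  refine ⟨?_, ?_, ?_⟩
  · linear_combination gain_value (Fweᵀ *ᵥ Vx + Lwe) he' + gain_value (Fwpᵀ *ᵥ Vx + Lwp) hp'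
  · have e1 := gain_gradient Fwe (Fweᵀ *ᵥ Vx + Lwe) he' hP
    have e2 := gain_gradient Fwp (Fwpᵀ *ᵥ Vx + Lwp) hp' hP
    rw [sub_eq_add_neg, sub_eq_add_neg, ← e1, ← e2]
    abel
  · have e1 := gain_hessian Fwe he' hP
    have e2 := gain_hessian Fwp hp' hP
    rw [sub_eq_add_neg, sub_eq_add_neg, ← e1, ← e2]
    abel

lemma riccatiRHS_symm
    (Lb : ℝ) (Lx : Fin 14 → ℝ) (Lwe Lwp : Fin 4 → ℝ)
    {Lxx : Matrix (Fin 14) (Fin 14) ℝ} (hL : Lxxᵀ = Lxx)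
    (Fx : Matrix (Fin 14) (Fin 14) ℝ) (Fwe Fwp : Matrix (Fin 14) (Fin 4) ℝ)
    {Ae Ap : Matrix (Fin 4) (Fin 4) ℝ} (he : Aeᵀ = Ae) (hp : Apᵀ = Ap)
    (Vx : Fin 14 → ℝ) {P : Matrix (Fin 14) (Fin 14) ℝ} (hP : Pᵀ = P) :
    (riccatiRHS Lb Lx Lwe Lwp Lxx Fx Fwe Fwp Ae Ap Vx P).2.2ᵀ =
      (riccatiRHS Lb Lx Lwe Lwp Lxx Fx Fwe Fwp Ae Ap Vx P).2.2 := by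
  simp only [riccatiRHS, transpose_add, transpose_sub, transpose_mul, transpose_transpose, hL, he,
    hp, hP, Matrix.mul_assoc]
  abel

end Algebra

/-! ### Smallness of the regularized inverse Hessians -/

section Inverse

open scoped Matrix.Norms.Operator

/-- `L + λ` is invertible for `λ > ‖L‖` by the Neumann series, and `λ A = 1 - L A` bounds its
inverse `A`. -/
lemma regularized_inverse {m : Type*} [Fintype m] [DecidableEq m] [Nonempty m]
    {L : Matrix m m ℝ} {M lam : ℝ} (hL : ‖L‖ ≤ M) (hlam : M < lam) :
    IsUnit (L + lam • (1 : Matrix m m ℝ)) ∧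
      ‖(L + lam • (1 : Matrix m m ℝ))⁻¹‖ ≤ (lam - M)⁻¹ := by
  have hM : 0 ≤ M := (norm_nonneg _).trans hL
  have hl : 0 < lam := hM.trans_lt hlam
  have hu : IsUnit (L + lam • (1 : Matrix m m ℝ)) := by
    have h1 : IsUnit (1 - (-(lam⁻¹ • L))) := by
      refine isUnit_one_sub_of_norm_lt_one ?_
      rw [norm_neg, norm_smul, norm_inv, Real.norm_of_nonneg hl.le, inv_mul_lt_iff₀ hl]
      linarith
    have h2 := h1.smul (Units.mk0 lam hl.ne')
    convert h2 using 1
    rw [Units.smul_mk0, sub_neg_eq_add, smul_add, smul_smul, mul_inv_cancel₀ hl.ne', one_smul,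
      add_comm]
  refine ⟨hu, ?_⟩
  set A := (L + lam • (1 : Matrix m m ℝ))⁻¹ with hA
  have h := mul_nonsing_inv _ ((isUnit_iff_isUnit_det _).1 hu)
  rw [← hA, Matrix.add_mul, smul_mul, Matrix.one_mul] at h
  have h2 : lam • A = 1 - L * A := eq_sub_of_add_eq' h
  have h3 : lam * ‖A‖ ≤ 1 + M * ‖A‖ := by
    calc lam * ‖A‖ = ‖lam • A‖ := by rw [norm_smul, Real.norm_of_nonneg hl.le]
      _ ≤ ‖(1 : Matrix m m ℝ)‖ + ‖L * A‖ := by rw [h2]; exact norm_sub_le _ _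
      _ ≤ 1 + M * ‖A‖ := by
        rw [norm_one]
        have := norm_mul_le L A
        nlinarith [norm_nonneg A]
  rw [← one_div, le_div_iff₀ (by linarith)]
  linarith

lemma abs_entry_le_opNorm {m n : Type*} [Fintype m] [Fintype n] (A : Matrix m n ℝ) (i : m) (j : n) :
    |A i j| ≤ ‖A‖ := by
  have h1 : ‖A i j‖₊ ≤ ∑ j, ‖A i j‖₊ :=
    Finset.single_le_sum (f := fun j => ‖A i j‖₊) (fun _ _ => zero_le) (Finset.mem_univ j)
  have h2 : ∑ j, ‖A i j‖₊ ≤ ‖A‖₊ := by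
    rw [linfty_opNNNorm_def]
    exact Finset.le_sup (f := fun i => ∑ j, ‖A i j‖₊) (Finset.mem_univ i)
  exact_mod_cast h1.trans h2

lemma exists_small_regularized_inverse {m : Type*} [Fintype m] [DecidableEq m] [Nonempty m]
    {a b : ℝ} {L : ℝ → Matrix m m ℝ} (hL : ContinuousOn L (Icc a b)) {ε : ℝ} (hε : 0 < ε) :
    ∃ l : ℝ, 0 ≤ l ∧ ∀ lam ≥ l,
      (∀ t ∈ Icc a b, IsUnit (L t + lam • (1 : Matrix m m ℝ))) ∧
      ContinuousOn (fun t => (L t + lam • (1 : Matrix m m ℝ))⁻¹) (Icc a b) ∧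
      ∀ t ∈ Icc a b, ∀ i j, |(L t + lam • (1 : Matrix m m ℝ))⁻¹ i j| ≤ ε := by
  obtain ⟨M, hM⟩ := isCompact_Icc.exists_bound_of_continuousOn hL
  refine ⟨|M| + ε⁻¹, by positivity, fun lam hlam => ?_⟩
  have hi : 0 < ε⁻¹ := by positivity
  have key := fun t ht => regularized_inverse ((hM t ht).trans (le_abs_self M))
    (by linarith : |M| < lam)
  refine ⟨fun t ht => (key t ht).1, fun t ht => ?_, fun t ht i j => ?_⟩
  · have hdet := (isUnit_iff_isUnit_det _).1 (key t ht).1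
    have h1 : ContinuousAt (Inv.inv : Matrix m m ℝ → _) (L t + lam • (1 : Matrix m m ℝ)) := by
      refine continuousAt_matrix_inv _ ?_
      rw [Ring.inverse_eq_inv']
      exact continuousAt_inv₀ hdet.ne_zero
    exact h1.comp_continuousWithinAt (f := fun t => L t + lam • (1 : Matrix m m ℝ))
      ((hL t ht).add continuousWithinAt_const)
  · refine (abs_entry_le_opNorm _ i j).trans ((key t ht).2.trans ?_)
    rw [inv_le_comm₀ (by linarith) hε]
    linarith

end Inverse

/-! ### The Riccati system as a smooth field affine at `A = 0` -/

section Smooth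

open scoped Matrix.Norms.Elementwise

variable {X : Type*} [NormedAddCommGroup X] [NormedSpace ℝ X]
  {l m n : Type*} [Fintype l] [Fintype m] [Fintype n] {k : WithTop ℕ∞}

lemma contDiff_matrix_iff {A : X → Matrix m n ℝ} :
    ContDiff ℝ k A ↔ ∀ i j, ContDiff ℝ k fun x => A x i j :=
  contDiff_pi.trans (forall_congr' fun _ => contDiff_pi)

@[fun_prop]
lemma ContDiff.matrix_mul' {A : X → Matrix l m ℝ} {B : X → Matrix m n ℝ}
    (hA : ContDiff ℝ k A) (hB : ContDiff ℝ k B) : ContDiff ℝ k fun x => A x * B x := by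
  rw [contDiff_matrix_iff] at *
  simp only [Matrix.mul_apply]
  exact fun i j => ContDiff.sum fun p _ => (hA i p).mul (hB p j)

@[fun_prop]
lemma ContDiff.matrix_transpose' {A : X → Matrix m n ℝ}
    (hA : ContDiff ℝ k A) : ContDiff ℝ k fun x => (A x)ᵀ := by
  rw [contDiff_matrix_iff] at *
  exact fun i j => hA j i

@[fun_prop]
lemma ContDiff.dotProduct' {u v : X → n → ℝ}
    (hu : ContDiff ℝ k u) (hv : ContDiff ℝ k v) : ContDiff ℝ k fun x => u x ⬝ᵥ v x := by
  rw [contDiff_pi] at *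
  exact ContDiff.sum fun p _ => (hu p).mul (hv p)

@[fun_prop]
lemma ContDiff.matrix_mulVec' {A : X → Matrix m n ℝ} {v : X → n → ℝ}
    (hA : ContDiff ℝ k A) (hv : ContDiff ℝ k v) : ContDiff ℝ k fun x => A x *ᵥ v x := by
  rw [contDiff_matrix_iff] at hA
  rw [contDiff_pi] at hv ⊢
  exact fun i => ContDiff.sum fun p _ => (hA i p).mul (hv p)

/-- Values of the coefficient data, in the order `L̄, Lₓ, L_we, L_wp, Lₓₓ, Fₓ, F_we, F_wp`. -/
abbrev Coeffs : Type :=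
  ℝ × (Fin 14 → ℝ) × (Fin 4 → ℝ) × (Fin 4 → ℝ) × Matrix (Fin 14) (Fin 14) ℝ ×
    Matrix (Fin 14) (Fin 14) ℝ × Matrix (Fin 14) (Fin 4) ℝ × Matrix (Fin 14) (Fin 4) ℝ

/-- Values of the two inverse regularized control Hessians. -/
abbrev InvHessians : Type := Matrix (Fin 4) (Fin 4) ℝ × Matrix (Fin 4) (Fin 4) ℝ

/-- Values of the expansion `(V, Vₓ, Vₓₓ)`. -/
abbrev ValueExpansion : Type := ℝ × (Fin 14 → ℝ) × Matrix (Fin 14) (Fin 14) ℝ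

/-- The vector field of the Riccati system, as a polynomial in all data jointly. The Hessian variable
enters through its symmetric part, which makes the Hessian component symmetric-valued. -/
noncomputable def riccatiField (p : Coeffs × InvHessians × ValueExpansion) : ValueExpansion :=
  -riccatiRHS p.1.1 p.1.2.1 p.1.2.2.1 p.1.2.2.2.1 p.1.2.2.2.2.1 p.1.2.2.2.2.2.1
    p.1.2.2.2.2.2.2.1 p.1.2.2.2.2.2.2.2 p.2.1.1 p.2.1.2 p.2.2.2.1 (symPart p.2.2.2.2)

lemma contDiff_riccatiField : ContDiff ℝ 1 riccatiField := by
  unfold riccatiField riccatiRHS symPart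
  fun_prop

/-- With vanishing inverse Hessians the field is affine in the unknowns. -/
lemma riccatiField_affine (c : Coeffs) (s : ℝ) (z : ValueExpansion) :
    riccatiField (c, 0, s • z) = s • riccatiField (c, 0, z) + (1 - s) • riccatiField (c, 0, 0) := by
  obtain ⟨Lb, Lx, Lwe, Lwp, Lxx, Fx, Fwe, Fwp⟩ := c
  obtain ⟨V, Vx, P⟩ := z
  simp only [riccatiField, riccatiRHS, symPart, Prod.fst_zero, Prod.snd_zero, 
    Prod.smul_mk, Prod.neg_mk, Prod.mk_add_mk, Prod.mk.injEq, zero_mulVec,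
    mulVec_zero, Matrix.mul_zero, Matrix.zero_mul, dotProduct_zero, transpose_smul,
    transpose_zero, Matrix.mul_add, Matrix.add_mul, Matrix.mul_smul, Matrix.smul_mul, mulVec_smul,
    smul_eq_mul, mul_zero, sub_zero, smul_zero, add_zero, zero_add]
  refine ⟨by ring, by module, by module⟩

end Smooth

/-! ### Symmetry and solvability of the Riccati system -/

section Reduction

open scoped Matrix.Norms.Elementwise

lemma hasDerivWithinAt_valueExpansion_iff {z : ℝ → ValueExpansion} {z' : ValueExpansion}
    {s : Set ℝ} {t : ℝ} :
    HasDerivWithinAt z z' s t ↔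
      HasDerivWithinAt (fun r => (z r).1) z'.1 s t ∧
      HasDerivWithinAt (fun r => (z r).2.1) z'.2.1 s t ∧
      ∀ i j, HasDerivWithinAt (fun r => (z r).2.2 i j) (z'.2.2 i j) s t := by
  have hmat : ∀ (P : ℝ → Matrix (Fin 14) (Fin 14) ℝ) (P' : Matrix (Fin 14) (Fin 14) ℝ),
      HasDerivWithinAt P P' s t ↔ ∀ i j, HasDerivWithinAt (fun r => P r i j) (P' i j) s t :=
    fun P P' => hasDerivWithinAt_pi.trans (forall_congr' fun _ => hasDerivWithinAt_pi)
  rw [← hmat]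
  exact ⟨fun h => ⟨h.fst, h.snd.fst, h.snd.snd⟩, fun h => h.1.prodMk (h.2.1.prodMk h.2.2)⟩

/-- The Hessian component of a solution with symmetric terminal value is symmetric. -/
lemma isSymm_of_solution {a b : ℝ} {c : ℝ → Coeffs} {d : ℝ → InvHessians}
    (hL : ∀ t ∈ Icc a b, (c t).2.2.2.2.1ᵀ = (c t).2.2.2.2.1)
    (he : ∀ t ∈ Icc a b, (d t).1ᵀ = (d t).1) (hp : ∀ t ∈ Icc a b, (d t).2ᵀ = (d t).2)
    {z : ℝ → ValueExpansion} (hzb : (z b).2.2ᵀ = (z b).2.2)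
    (hz : ∀ t ∈ Icc a b, HasDerivWithinAt z (riccatiField (c t, d t, z t)) (Icc a b) t) :
    ∀ t ∈ Icc a b, (z t).2.2ᵀ = (z t).2.2 := by
  intro t ht
  ext i j
  have key := norm_le_gronwallBound_backward
    (z := fun r => (z r).2.2 j i - (z r).2.2 i j) (z' := fun _ => 0) (K := 0) (ε := 0)
    (fun r hr => by
      obtain ⟨-, -, h⟩ := hasDerivWithinAt_valueExpansion_iff.1 (hz r hr)
      have hs : (riccatiField (c r, d r, z r)).2.2ᵀ = (riccatiField (c r, d r, z r)).2.2 := by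
        simp only [riccatiField, Prod.snd_neg, transpose_neg]
        rw [riccatiRHS_symm _ _ _ _ (hL r hr) _ _ _ (he r hr) (hp r hr) _ (symPart_transpose _)]
      have hs' := congrFun (congrFun hs i) j
      rw [transpose_apply] at hs'
      have := (h j i).sub (h i j)
      rwa [hs', sub_self] at this)
    (fun r _ => by simp) t ht
  have hb : (z b).2.2 j i - (z b).2.2 i j = 0 := by
    have := congrFun (congrFun hzb i) j
    rw [transpose_apply] at this
    rw [this, sub_self]
  simp only [hb, norm_zero, gronwallBound_ε0, zero_mul] at key
  exact sub_eq_zero.1 (norm_le_zero_iff.1 key)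

/-- The perturbation theorem for the Riccati system, with all matrix bounds stated entrywise so that
no choice of matrix norm appears. -/
lemma exists_unique_solution_riccati {a b : ℝ} (hab : a ≤ b) {c : ℝ → Coeffs}
    (hc : ContinuousOn c (Icc a b)) (z₀ : ValueExpansion) :
    ∃ ε > (0 : ℝ), ∀ d : ℝ → InvHessians, ContinuousOn d (Icc a b) →
      (∀ t ∈ Icc a b, ∀ i j, |(d t).1 i j| ≤ ε) → (∀ t ∈ Icc a b, ∀ i j, |(d t).2 i j| ≤ ε) →
      ∃ z : ℝ → ValueExpansion, z b = z₀ ∧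
        (∀ t ∈ Icc a b, HasDerivWithinAt z (riccatiField (c t, d t, z t)) (Icc a b) t) ∧
        (∃ R : ℝ, ∀ t ∈ Icc a b,
          |(z t).1| ≤ R ∧ ‖(z t).2.1‖ ≤ R ∧ ∀ i j, |(z t).2.2 i j| ≤ R) ∧
        ∀ w : ℝ → ValueExpansion, w b = z₀ →
          (∀ t ∈ Icc a b, HasDerivWithinAt w (riccatiField (c t, d t, w t)) (Icc a b) t) →
          ∀ t ∈ Icc a b, w t = z t := by
  obtain ⟨ε, hε, key⟩ := exists_unique_solution_of_small_perturbation contDiff_riccatiField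
    riccatiField_affine hab hc z₀
  refine ⟨ε, hε, fun d hd he hp => ?_⟩
  obtain ⟨z, h0, h1, ⟨R, hR⟩, h2⟩ := key d hd fun t ht =>
    norm_prod_le_iff.2 ⟨(norm_le_iff hε.le).2 (he t ht), (norm_le_iff hε.le).2 (hp t ht)⟩
  refine ⟨z, h0, h1, ⟨R, fun t ht => ?_⟩, h2⟩
  have h := norm_prod_le_iff.1 (hR t ht)
  have h' := norm_prod_le_iff.1 h.2
  exact ⟨h.1, h'.1, fun i j => (norm_entry_le_entrywise_sup_norm _).trans h'.2⟩

end Reduction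

/-- Regularization theorem for continuous-time game-theoretic DDP: for
continuous coefficient data along the nominal trajectory (with symmetric L̄ₓₓ, L̄wₑwₑ,
L̄wₚwₚ and symmetric terminal Hessian H_f), there exists λ* ≥ 0 such that for every
λ ≥ λ*, the regularized backward DDP terminal-value problem admits a unique solution
defined on all of [t0,tf], and this solution is bounded on [t0,tf]. -/
theorem ddp_regularized_backward_unique_bounded (t0 tf : ℝ) (ht : t0 < tf)
    (Lb : ℝ → ℝ) (Lx : ℝ → Fin 14 → ℝ) (Lwe Lwp : ℝ → Fin 4 → ℝ)
    (Lxx : ℝ → Matrix (Fin 14) (Fin 14) ℝ) (Lwewe Lwpwp : ℝ → Matrix (Fin 4) (Fin 4) ℝ)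
    (Fb : ℝ → Fin 14 → ℝ)
    (Fx : ℝ → Matrix (Fin 14) (Fin 14) ℝ) (Fwe Fwp : ℝ → Matrix (Fin 14) (Fin 4) ℝ)
    (hLb : ContinuousOn Lb (Set.Icc t0 tf))
    (hLx : ∀ i, ContinuousOn (fun t => Lx t i) (Set.Icc t0 tf))
    (hLwe : ∀ i, ContinuousOn (fun t => Lwe t i) (Set.Icc t0 tf))
    (hLwp : ∀ i, ContinuousOn (fun t => Lwp t i) (Set.Icc t0 tf))
    (hLxx : ∀ i j, ContinuousOn (fun t => Lxx t i j) (Set.Icc t0 tf))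
    (hLxxSymm : ∀ t ∈ Set.Icc t0 tf, (Lxx t)ᵀ = Lxx t)
    (hLwewe : ∀ i j, ContinuousOn (fun t => Lwewe t i j) (Set.Icc t0 tf))
    (hLweweSymm : ∀ t ∈ Set.Icc t0 tf, (Lwewe t)ᵀ = Lwewe t)
    (hLwpwp : ∀ i j, ContinuousOn (fun t => Lwpwp t i j) (Set.Icc t0 tf))
    (hLwpwpSymm : ∀ t ∈ Set.Icc t0 tf, (Lwpwp t)ᵀ = Lwpwp t)
    (hFb : ∀ i, ContinuousOn (fun t => Fb t i) (Set.Icc t0 tf))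
    (hFx : ∀ i j, ContinuousOn (fun t => Fx t i j) (Set.Icc t0 tf))
    (hFwe : ∀ i j, ContinuousOn (fun t => Fwe t i j) (Set.Icc t0 tf))
    (hFwp : ∀ i j, ContinuousOn (fun t => Fwp t i j) (Set.Icc t0 tf))
    (vf : ℝ) (gf : Fin 14 → ℝ) (Hf : Matrix (Fin 14) (Fin 14) ℝ) (hHf : Hfᵀ = Hf) :
    ∃ lamStar ≥ (0 : ℝ), ∀ lam ≥ lamStar,
      ∃ (V : ℝ → ℝ) (Vx : ℝ → Fin 14 → ℝ) (Vxx : ℝ → Matrix (Fin 14) (Fin 14) ℝ),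
        IsDDPBackwardSol t0 tf Lb Lx Lwe Lwp Lxx Lwewe Lwpwp Fx Fwe Fwp
          lam vf gf Hf V Vx Vxx ∧
        (∃ C : ℝ, ∀ t ∈ Set.Icc t0 tf,
          |V t| ≤ C ∧ ‖Vx t‖ ≤ C ∧ ∀ i j, |Vxx t i j| ≤ C) ∧
        (∀ (W : ℝ → ℝ) (Wx : ℝ → Fin 14 → ℝ) (Wxx : ℝ → Matrix (Fin 14) (Fin 14) ℝ),
          IsDDPBackwardSol t0 tf Lb Lx Lwe Lwp Lxx Lwewe Lwpwp Fx Fwe Fwp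
            lam vf gf Hf W Wx Wxx →
          ∀ t ∈ Set.Icc t0 tf, W t = V t ∧ Wx t = Vx t ∧ Wxx t = Vxx t) := by
  have hmat : ∀ {m n : ℕ} {A : ℝ → Matrix (Fin m) (Fin n) ℝ},
      (∀ i j, ContinuousOn (fun t => A t i j) (Icc t0 tf)) → ContinuousOn A (Icc t0 tf) :=
    fun h => continuousOn_pi.2 fun i => continuousOn_pi.2 fun j => h i j
  have cLwewe := hmat hLwewe
  have cLwpwp := hmat hLwpwp
  set c : ℝ → Coeffs := fun t =>
    (Lb t, Lx t, Lwe t, Lwp t, Lxx t, Fx t, Fwe t, Fwp t) with hcdef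
  have hc : ContinuousOn c (Icc t0 tf) :=
    hLb.prodMk ((continuousOn_pi.2 hLx).prodMk ((continuousOn_pi.2 hLwe).prodMk
      ((continuousOn_pi.2 hLwp).prodMk ((hmat hLxx).prodMk ((hmat hFx).prodMk
        ((hmat hFwe).prodMk (hmat hFwp)))))))
  obtain ⟨ε, hε, key⟩ := exists_unique_solution_riccati ht.le hc (vf, gf, Hf)
  obtain ⟨le, hle0, hle⟩ := exists_small_regularized_inverse cLwewe hε
  obtain ⟨lp, -, hlp⟩ := exists_small_regularized_inverse cLwpwp hε
  refine ⟨max le lp, hle0.trans (le_max_left _ _), fun lam hlam => ?_⟩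
  obtain ⟨ue, cAe, sAe⟩ := hle lam ((le_max_left _ _).trans hlam)
  obtain ⟨up, cAp, sAp⟩ := hlp lam ((le_max_right _ _).trans hlam)
  set d : ℝ → InvHessians := fun t =>
    ((Lwewe t + lam • (1 : Matrix (Fin 4) (Fin 4) ℝ))⁻¹,
      (Lwpwp t + lam • (1 : Matrix (Fin 4) (Fin 4) ℝ))⁻¹) with hddef
  obtain ⟨z, hzf, hz, ⟨R, hR⟩, huniq⟩ := key d (cAe.prodMk cAp) sAe sAp
  have hAe : ∀ t ∈ Icc t0 tf, (d t).1ᵀ = (d t).1 := fun t h => by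
    simp only [hddef, transpose_nonsing_inv, transpose_add, transpose_smul, transpose_one,
      hLweweSymm t h]
  have hAp : ∀ t ∈ Icc t0 tf, (d t).2ᵀ = (d t).2 := fun t h => by
    simp only [hddef, transpose_nonsing_inv, transpose_add, transpose_smul, transpose_one,
      hLwpwpSymm t h]
  have hsymm := isSymm_of_solution hLxxSymm hAe hAp (by rw [hzf]; exact hHf) hz
  -- on symmetric Hessians the reduced field is the original one
  have hfield : ∀ t ∈ Icc t0 tf, ∀ v : ValueExpansion, v.2.2ᵀ = v.2.2 →
      riccatiField (c t, d t, v) =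
        -ddpBackwardRHS (Lb t) (Lx t) (Lwe t) (Lwp t) (Lxx t) (Lwewe t) (Lwpwp t)
          (Fx t) (Fwe t) (Fwp t) lam v.2.1 v.2.2 := fun t h v hv => by
    rw [ddpBackwardRHS_eq_riccatiRHS _ _ _ _ _ _ _ _ _ hv (ue t h) (up t h)]
    simp only [riccatiField, symPart_of_symm hv, hcdef, hddef]
  refine ⟨fun t => (z t).1, fun t => (z t).2.1, fun t => (z t).2.2,
    ⟨congrArg (fun v => v.1) hzf, congrArg (fun v => v.2.1) hzf, congrArg (fun v => v.2.2) hzf,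
      hsymm, fun t h => ?_⟩, ⟨R, hR⟩, ?_⟩
  · have := hz t h
    rw [hfield t h _ (hsymm t h)] at this
    exact hasDerivWithinAt_valueExpansion_iff.1 this
  · rintro W Wx Wxx ⟨hW, hWx, hWxx, hWs, hWd⟩ t h
    have := huniq (fun t => (W t, Wx t, Wxx t)) (by rw [hW, hWx, hWxx]) (fun r hr => by
      rw [hfield r hr _ (hWs r hr)]
      exact hasDerivWithinAt_valueExpansion_iff.2 (hWd r hr)) t h
    exact ⟨congrArg (fun v => v.1) this, congrArg (fun v => v.2.1) this,
      congrArg (fun v => v.2.2) this⟩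
end

section
/- Fix t0 < tf. Let A : [t0,tf] → ℝ^{6×6} be continuous and set 𝔄(t) ∈ ℝ^{12×12} to be the block-diagonal matrix diag(A(t), A(t)). Let m_e, m_p > 0 and define 𝔅_e = [0_{3×3}; (1/m_e)I_3; 0_{3×3}; 0_{3×3}] ∈ ℝ^{12×3} and 𝔅_p = [0_{3×3}; 0_{3×3}; 0_{3×3}; (1/m_p)I_3] ∈ ℝ^{12×3} (stacked blocks of three rows each). Let Q_e, Q_p : [t0,tf] → ℝ^{6×6}, R_e, R_p : [t0,tf] → ℝ^{3×3}, M : [t0,tf] → ℝ^{3×3} be continuous with symmetric positive definite values, and let F_e, F_p ∈ ℝ^{6×6}, M_f ∈ ℝ^{3×3} be symmetric positive definite. Define 𝔐(t) = diag(M(t), 0_{3×3}) ∈ ℝ^{6×6}, 𝔐_f = diag(M_f, 0_{3×3}), and the block matrices 𝔔(t) = [[Q_e(t) − 𝔐(t), 𝔐(t)], [𝔐(t), −Q_p(t) − 𝔐(t)]] ∈ ℝ^{12×12} and 𝔔_f = [[F_e − 𝔐_f, 𝔐_f], [𝔐_f, −F_p − 𝔐_f]]. For continuous controls u_e, u_p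 : [t0,tf] → ℝ^3 and initial state x0 ∈ ℝ^12, let x denote the solution of dx/dt = 𝔄(t)x + 𝔅_e u_e(t) + 𝔅_p u_p(t), x(t0) = x0, and define J(u_e, u_p) = ∫_{t0}^{tf} ( x(t)^T 𝔔(t) x(t) + u_e(t)^T R_e(t) u_e(t) − u_p(t)^T R_p(t) u_p(t) ) dt + x(tf)^T 𝔔_f x(tf). Suppose S : [t0,tf] → ℝ^{12×12} is a symmetric, bounded, differentiable solution of the Riccati equation −dS/dt = 𝔄(t)^T S + S 𝔄(t) + 𝔔(t) − S 𝔅_e R_e(t)^{-1} 𝔅_e^T S + S 𝔅_p R_p(t)^{-1} 𝔅_p^T S with S(tf) = 𝔔_f. Define the feedback strategies u_e*(ξ, t) = −R_e(t)^{-1} 𝔅_e^T S(t) ξ and u_p*(ξ, t) = R_p(t)^{-1} 𝔅_p^T S(t) ξ for ξ ∈ ℝ^12. Let x° be the solution of dx/dt = 𝔄(t)x + 𝔅_e u_e*(x,t) + 𝔅_p u_p*(x,t), x(t0) = x0, and let J° = J(t ↦ u_e*(x°(t),t), t ↦ u_p*(x°(t),t)). Then the feedback pair is a saddle point under the closed-loop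 information pattern: (i) for every continuous ũ_p : [t0,tf] → ℝ^3, letting x̃ solve dx/dt = 𝔄(t)x + 𝔅_e u_e*(x,t) + 𝔅_p ũ_p(t), x(t0) = x0, one has J(t ↦ u_e*(x̃(t),t), ũ_p) ≤ J°; and (ii) for every continuous ũ_e : [t0,tf] → ℝ^3, letting x̂ solve dx/dt = 𝔄(t)x + 𝔅_e ũ_e(t) + 𝔅_p u_p*(x,t), x(t0) = x0, one has J(ũ_e, t ↦ u_p*(x̂(t),t)) ≥ J°. -/
/-!
The proof is completion of squares along trajectories. Put `W t = x t ⬝ᵥ S t *ᵥ x t` for a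
trajectory `x` driven by continuous controls `ue`, `up`. The Riccati equation turns
`W' + (running cost)` into
`(ue - ue*) ⬝ᵥ Re *ᵥ (ue - ue*) - (up - up*) ⬝ᵥ Rp *ᵥ (up - up*)`
(`riccati_completion`), where `ue*`, `up*` are the feedback values at the current state.
Integrating, and using `S tf = Qf`, the total cost equals `x t0 ⬝ᵥ S t0 *ᵥ x t0` plus the integral
of this difference of squares (`cost_eq`). When both players use feedback the integral vanishes; when
one of them deviates only the square of that player survives, and its sign gives the inequality.
-/

open Matrix Set

/-- The 6-dimensional index: position ⊕ velocity. -/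
abbrev I6 : Type := Fin 3 ⊕ Fin 3

/-- The 12-dimensional index: evader state ⊕ pursuer state. -/
abbrev I12 : Type := I6 ⊕ I6

/-- 𝔅_e = [0; (1/m_e)I₃; 0; 0] ∈ ℝ^{12×3}. -/
noncomputable def BeMat (me : ℝ) : Matrix I12 (Fin 3) ℝ :=
  Matrix.of fun i j => match i with
    | Sum.inl (Sum.inr k) => if k = j then 1 / me else 0
    | _ => 0

/-- 𝔅_p = [0; 0; 0; (1/m_p)I₃] ∈ ℝ^{12×3}. -/
noncomputable def BpMat (mp : ℝ) : Matrix I12 (Fin 3) ℝ :=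
  Matrix.of fun i j => match i with
    | Sum.inr (Sum.inr k) => if k = j then 1 / mp else 0
    | _ => 0

/-- 𝔄 = diag(A, A) ∈ ℝ^{12×12}. -/
noncomputable def Abig (A : Matrix I6 I6 ℝ) : Matrix I12 I12 ℝ :=
  Matrix.fromBlocks A 0 0 A

/-- 𝔐 = diag(M, 0) ∈ ℝ^{6×6}. -/
noncomputable def Mfrak (M : Matrix (Fin 3) (Fin 3) ℝ) : Matrix I6 I6 ℝ :=
  Matrix.fromBlocks M 0 0 0

/-- 𝔔 = [[Q_e − 𝔐, 𝔐], [𝔐, −Q_p − 𝔐]] ∈ ℝ^{12×12}. -/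
noncomputable def Qfrak (Qe Qp : Matrix I6 I6 ℝ) (M : Matrix (Fin 3) (Fin 3) ℝ) :
    Matrix I12 I12 ℝ :=
  Matrix.fromBlocks (Qe - Mfrak M) (Mfrak M) (Mfrak M) (-Qp - Mfrak M)

/-- Evader feedback u_e*(ξ, t) = −R_e⁻¹ 𝔅_eᵀ S ξ. -/
noncomputable def ueFb (Re : Matrix (Fin 3) (Fin 3) ℝ) (me : ℝ)
    (S : Matrix I12 I12 ℝ) (ξ : I12 → ℝ) : Fin 3 → ℝ :=
  -(Re⁻¹ *ᵥ ((BeMat me)ᵀ *ᵥ (S *ᵥ ξ)))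

/-- Pursuer feedback u_p*(ξ, t) = R_p⁻¹ 𝔅_pᵀ S ξ. -/
noncomputable def upFb (Rp : Matrix (Fin 3) (Fin 3) ℝ) (mp : ℝ)
    (S : Matrix I12 I12 ℝ) (ξ : I12 → ℝ) : Fin 3 → ℝ :=
  Rp⁻¹ *ᵥ ((BpMat mp)ᵀ *ᵥ (S *ᵥ ξ))

/-- The game cost J(u_e, u_p) evaluated along a trajectory x. -/
noncomputable def costLQ (t0 tf : ℝ) (Q : ℝ → Matrix I12 I12 ℝ) (Qf : Matrix I12 I12 ℝ)
    (Re Rp : ℝ → Matrix (Fin 3) (Fin 3) ℝ)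
    (x : ℝ → I12 → ℝ) (ue up : ℝ → Fin 3 → ℝ) : ℝ :=
  (∫ t in t0..tf,
      (x t ⬝ᵥ (Q t) *ᵥ x t + ue t ⬝ᵥ (Re t) *ᵥ ue t - up t ⬝ᵥ (Rp t) *ᵥ up t))
    + x tf ⬝ᵥ Qf *ᵥ x tf

section LQHelpers

variable {m n k : Type*} [Fintype n]

lemma dotProduct_hasDerivWithinAt {f g : ℝ → n → ℝ} {f' g' : n → ℝ} {s : Set ℝ} {t : ℝ}
    (hf : HasDerivWithinAt f f' s t) (hg : HasDerivWithinAt g g' s t) :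
    HasDerivWithinAt (fun r => f r ⬝ᵥ g r) (f' ⬝ᵥ g t + f t ⬝ᵥ g') s t := by
  rw [hasDerivWithinAt_pi] at hf hg
  simp only [dotProduct, ← Finset.sum_add_distrib]
  exact HasDerivWithinAt.fun_sum fun i _ => (hf i).mul (hg i)

lemma mulVec_hasDerivWithinAt [Fintype k] {S : ℝ → Matrix k n ℝ} {S' : Matrix k n ℝ} {x : ℝ → n → ℝ}
    {x' : n → ℝ} {s : Set ℝ} {t : ℝ}
    (hS : ∀ i j, HasDerivWithinAt (fun r => S r i j) (S' i j) s t)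
    (hx : HasDerivWithinAt x x' s t) :
    HasDerivWithinAt (fun r => S r *ᵥ x r) (S' *ᵥ x t + S t *ᵥ x') s t := by
  rw [hasDerivWithinAt_pi]
  intro i
  exact dotProduct_hasDerivWithinAt (f := fun r => S r i) (hasDerivWithinAt_pi.2 (hS i)) hx

lemma dotProduct_continuousOn {f g : ℝ → n → ℝ} {s : Set ℝ}
    (hf : ContinuousOn f s) (hg : ContinuousOn g s) :
    ContinuousOn (fun r => f r ⬝ᵥ g r) s := by
  rw [continuousOn_pi] at hf hg
  exact continuousOn_finsetSum _ fun i _ => (hf i).mul (hg i)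

lemma mulVec_continuousOn {S : ℝ → Matrix k n ℝ} {x : ℝ → n → ℝ} {s : Set ℝ}
    (hS : ∀ i j, ContinuousOn (fun r => S r i j) s) (hx : ContinuousOn x s) :
    ContinuousOn (fun r => S r *ᵥ x r) s :=
  continuousOn_pi.2 fun i =>
    dotProduct_continuousOn (f := fun r => S r i) (continuousOn_pi.2 (hS i)) hx

lemma inv_continuousOn [DecidableEq n] {R : ℝ → Matrix n n ℝ} {s : Set ℝ}
    (hR : ∀ i j, ContinuousOn (fun r => R r i j) s) (hdet : ∀ t ∈ s, (R t).det ≠ 0) (i j : n) :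
    ContinuousOn (fun r => (R r)⁻¹ i j) s := by
  have hR' : ContinuousOn R s := continuousOn_pi.2 fun i => continuousOn_pi.2 (hR i)
  have h1 : ContinuousOn (fun r => (R r).det) s :=
    (continuous_id.matrix_det).comp_continuousOn hR'
  have h2 : ContinuousOn (fun r => (R r).adjugate i j) s :=
    ((continuous_id.matrix_adjugate).matrix_elem i j).comp_continuousOn hR'
  simp only [Matrix.inv_def, Ring.inverse_eq_inv', Matrix.smul_apply, smul_eq_mul]
  exact (h1.inv₀ hdet).mul h2

lemma dotProduct_mulVec_of_symm {S : Matrix n n ℝ} (hS : S.IsSymm) (x y : n → ℝ) :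
    x ⬝ᵥ S *ᵥ y = (S *ᵥ x) ⬝ᵥ y := by
  rw [dotProduct_mulVec, ← mulVec_transpose, hS.eq]

lemma posDef_isSymm {R : Matrix k k ℝ} (hR : R.PosDef) : R.IsSymm := by
  rw [Matrix.IsSymm, ← conjTranspose_eq_transpose_of_trivial]
  exact hR.isHermitian

/-- Expansion of the square centred at `R⁻¹ a`. -/
lemma square_expand [DecidableEq n] {R : Matrix n n ℝ} (hR : R.PosDef) (u a : n → ℝ) :
    (u - R⁻¹ *ᵥ a) ⬝ᵥ R *ᵥ (u - R⁻¹ *ᵥ a)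
      = u ⬝ᵥ R *ᵥ u - 2 * (u ⬝ᵥ a) + a ⬝ᵥ R⁻¹ *ᵥ a := by
  have h1 : R *ᵥ (R⁻¹ *ᵥ a) = a := by
    rw [mulVec_mulVec, mul_nonsing_inv _ hR.det_pos.ne'.isUnit, one_mulVec]
  have h2 : (R⁻¹ *ᵥ a) ⬝ᵥ R *ᵥ u = u ⬝ᵥ a := by
    rw [dotProduct_mulVec_of_symm (posDef_isSymm hR), h1, dotProduct_comm]
  rw [mulVec_sub, h1, sub_dotProduct, dotProduct_sub, dotProduct_sub, h2,
    dotProduct_comm (R⁻¹ *ᵥ a) a]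
  ring

lemma integral_square_nonneg {t0 tf : ℝ} (ht : t0 < tf) {R : ℝ → Matrix n n ℝ}
    (hR : ∀ t ∈ Icc t0 tf, (R t).PosDef) (w : ℝ → n → ℝ) :
    0 ≤ ∫ t in t0..tf, w t ⬝ᵥ R t *ᵥ w t :=
  intervalIntegral.integral_nonneg ht.le fun t h => by
    simpa using (hR t h).posSemidef.dotProduct_mulVec_nonneg (w t)

variable [Fintype m] [DecidableEq m]

lemma gain_continuousOn {R : ℝ → Matrix m m ℝ} {S : ℝ → Matrix n n ℝ} {x : ℝ → n → ℝ}
    {s : Set ℝ} (hRc : ∀ i j, ContinuousOn (fun t => R t i j) s) (hR : ∀ t ∈ s, (R t).PosDef)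
    (B : Matrix m n ℝ) (hS : ∀ i j, ContinuousOn (fun t => S t i j) s) (hx : ContinuousOn x s) :
    ContinuousOn (fun t => (R t)⁻¹ *ᵥ (B *ᵥ (S t *ᵥ x t))) s := by
  have h1 : ContinuousOn (fun t => S t *ᵥ x t) s := mulVec_continuousOn hS hx
  have h2 : ContinuousOn (fun t => B *ᵥ (S t *ᵥ x t)) s :=
    mulVec_continuousOn (S := fun _ => B) (fun _ _ => continuousOn_const) h1
  exact mulVec_continuousOn (S := fun t => (R t)⁻¹)
    (inv_continuousOn hRc fun t h => (hR t h).det_pos.ne') h2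

/-- Right-hand side of the Riccati equation `dS/dt = riccatiRhs`, for general input matrices
`Be`, `Bp`. -/
noncomputable def riccatiRhs (A Q S : Matrix n n ℝ) (Be Bp : Matrix n m ℝ)
    (Re Rp : Matrix m m ℝ) : Matrix n n ℝ :=
  -(Aᵀ * S + S * A + Q - S * Be * Re⁻¹ * Beᵀ * S + S * Bp * Rp⁻¹ * Bpᵀ * S)

/-- Pointwise completion of squares: the derivative of `x ⬝ᵥ S *ᵥ x` plus the running cost is the
difference of the squared deviations of the two controls from their feedback values. -/
lemma riccati_completion {A Q S : Matrix n n ℝ} {Be Bp : Matrix n m ℝ} {Re Rp : Matrix m m ℝ}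
    (hS : S.IsSymm) (hRe : Re.PosDef) (hRp : Rp.PosDef) (x : n → ℝ) (u v : m → ℝ) :
    (A *ᵥ x + Be *ᵥ u + Bp *ᵥ v) ⬝ᵥ S *ᵥ x
        + x ⬝ᵥ (riccatiRhs A Q S Be Bp Re Rp *ᵥ x + S *ᵥ (A *ᵥ x + Be *ᵥ u + Bp *ᵥ v))
        + (x ⬝ᵥ Q *ᵥ x + u ⬝ᵥ Re *ᵥ u - v ⬝ᵥ Rp *ᵥ v)
      = (u - -(Re⁻¹ *ᵥ (Beᵀ *ᵥ (S *ᵥ x)))) ⬝ᵥ Re *ᵥ (u - -(Re⁻¹ *ᵥ (Beᵀ *ᵥ (S *ᵥ x))))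
        - (v - Rp⁻¹ *ᵥ (Bpᵀ *ᵥ (S *ᵥ x))) ⬝ᵥ Rp *ᵥ (v - Rp⁻¹ *ᵥ (Bpᵀ *ᵥ (S *ᵥ x))) := by
  have hB : ∀ (B : Matrix n m ℝ) (w : m → ℝ) (p : n → ℝ), p ⬝ᵥ B *ᵥ w = w ⬝ᵥ Bᵀ *ᵥ p := by
    intro B w p
    rw [dotProduct_mulVec, ← mulVec_transpose, dotProduct_comm]
  have hA : x ⬝ᵥ Aᵀ *ᵥ (S *ᵥ x) = (S *ᵥ x) ⬝ᵥ A *ᵥ x := by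
    rw [dotProduct_mulVec, ← mulVec_transpose, transpose_transpose, dotProduct_comm]
  have hSq : ∀ y : n → ℝ, x ⬝ᵥ S *ᵥ y = (S *ᵥ x) ⬝ᵥ y := dotProduct_mulVec_of_symm hS x
  -- The Riccati term in terms of `S *ᵥ x`.
  have hR : x ⬝ᵥ riccatiRhs A Q S Be Bp Re Rp *ᵥ x
      = -(2 * ((S *ᵥ x) ⬝ᵥ A *ᵥ x) + x ⬝ᵥ Q *ᵥ x
        - (Beᵀ *ᵥ (S *ᵥ x)) ⬝ᵥ Re⁻¹ *ᵥ (Beᵀ *ᵥ (S *ᵥ x))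
        + (Bpᵀ *ᵥ (S *ᵥ x)) ⬝ᵥ Rp⁻¹ *ᵥ (Bpᵀ *ᵥ (S *ᵥ x))) := by
    simp only [riccatiRhs, neg_mulVec, add_mulVec, sub_mulVec, ← mulVec_mulVec, dotProduct_neg,
      dotProduct_add, dotProduct_sub, hSq, hA, hB Be, hB Bp]
    rw [dotProduct_comm (Re⁻¹ *ᵥ _), dotProduct_comm (Rp⁻¹ *ᵥ _)]
    ring
  rw [← mulVec_neg, square_expand hRe, square_expand hRp, dotProduct_add x, hR, hSq,
    dotProduct_comm _ (S *ᵥ x)]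
  simp only [dotProduct_add, hB Be, hB Bp, mulVec_neg, dotProduct_neg, neg_dotProduct]
  ring

/-- The cost along a trajectory is `x t0 ⬝ᵥ S t0 *ᵥ x t0` plus the integrated difference of the
squared deviations from feedback. -/
lemma cost_eq {t0 tf : ℝ} (ht : t0 < tf) {A Q S : ℝ → Matrix n n ℝ} {Be Bp : Matrix n m ℝ}
    {Re Rp : ℝ → Matrix m m ℝ}
    (hQ : ∀ i j, ContinuousOn (fun t => Q t i j) (Icc t0 tf))
    (hRec : ∀ i j, ContinuousOn (fun t => Re t i j) (Icc t0 tf))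
    (hRpc : ∀ i j, ContinuousOn (fun t => Rp t i j) (Icc t0 tf))
    (hRe : ∀ t ∈ Icc t0 tf, (Re t).PosDef) (hRp : ∀ t ∈ Icc t0 tf, (Rp t).PosDef)
    (hSs : ∀ t ∈ Icc t0 tf, (S t).IsSymm)
    (hS : ∀ t ∈ Icc t0 tf, ∀ i j, HasDerivWithinAt (fun r => S r i j)
      (riccatiRhs (A t) (Q t) (S t) Be Bp (Re t) (Rp t) i j) (Icc t0 tf) t)
    {x : ℝ → n → ℝ} {u v ue up : ℝ → m → ℝ}
    (hu : ContinuousOn u (Icc t0 tf)) (hv : ContinuousOn v (Icc t0 tf))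
    (hue : ∀ t, ue t = -((Re t)⁻¹ *ᵥ (Beᵀ *ᵥ (S t *ᵥ x t))))
    (hup : ∀ t, up t = (Rp t)⁻¹ *ᵥ (Bpᵀ *ᵥ (S t *ᵥ x t)))
    (huec : ContinuousOn ue (Icc t0 tf)) (hupc : ContinuousOn up (Icc t0 tf))
    (hx : ∀ t ∈ Icc t0 tf,
      HasDerivWithinAt x (A t *ᵥ x t + Be *ᵥ u t + Bp *ᵥ v t) (Icc t0 tf) t) :
    (∫ t in t0..tf, (x t ⬝ᵥ Q t *ᵥ x t + u t ⬝ᵥ Re t *ᵥ u t - v t ⬝ᵥ Rp t *ᵥ v t))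
        + x tf ⬝ᵥ S tf *ᵥ x tf
      = x t0 ⬝ᵥ S t0 *ᵥ x t0
        + ∫ t in t0..tf, ((u t - ue t) ⬝ᵥ Re t *ᵥ (u t - ue t)
            - (v t - up t) ⬝ᵥ Rp t *ᵥ (v t - up t)) := by
  have hxc : ContinuousOn x (Icc t0 tf) := fun t h => (hx t h).continuousWithinAt
  have hLc : ContinuousOn
      (fun t => x t ⬝ᵥ Q t *ᵥ x t + u t ⬝ᵥ Re t *ᵥ u t - v t ⬝ᵥ Rp t *ᵥ v t) (Icc t0 tf) :=
    ((dotProduct_continuousOn hxc (mulVec_continuousOn hQ hxc)).add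
      (dotProduct_continuousOn hu (mulVec_continuousOn hRec hu))).sub
      (dotProduct_continuousOn hv (mulVec_continuousOn hRpc hv))
  have hDc : ContinuousOn (fun t => (u t - ue t) ⬝ᵥ Re t *ᵥ (u t - ue t)
      - (v t - up t) ⬝ᵥ Rp t *ᵥ (v t - up t)) (Icc t0 tf) :=
    (dotProduct_continuousOn (hu.sub huec) (mulVec_continuousOn hRec (hu.sub huec))).sub
      (dotProduct_continuousOn (hv.sub hupc) (mulVec_continuousOn hRpc (hv.sub hupc)))
  have hL := hLc.intervalIntegrable_of_Icc (μ := MeasureTheory.volume) ht.le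
  have hD := hDc.intervalIntegrable_of_Icc (μ := MeasureTheory.volume) ht.le
  have hW : ∀ t ∈ Icc t0 tf, HasDerivWithinAt (fun r => x r ⬝ᵥ S r *ᵥ x r)
      (((u t - ue t) ⬝ᵥ Re t *ᵥ (u t - ue t) - (v t - up t) ⬝ᵥ Rp t *ᵥ (v t - up t))
        - (x t ⬝ᵥ Q t *ᵥ x t + u t ⬝ᵥ Re t *ᵥ u t - v t ⬝ᵥ Rp t *ᵥ v t)) (Icc t0 tf) t := by
    intro t h
    have h1 := dotProduct_hasDerivWithinAt (hx t h) (mulVec_hasDerivWithinAt (hS t h) (hx t h))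
    convert h1 using 1
    rw [hue, hup, ← riccati_completion (A := A t) (Q := Q t) (hSs t h) (hRe t h) (hRp t h)]
    ring
  have hF := intervalIntegral.integral_eq_sub_of_hasDerivAt_of_le ht.le
    (fun t h => (hW t h).continuousWithinAt)
    (fun t h => (hW t (Ioo_subset_Icc_self h)).hasDerivAt (Icc_mem_nhds h.1 h.2)) (hD.sub hL)
  rw [intervalIntegral.integral_sub hD hL] at hF
  linarith

end LQHelpers

lemma Qfrak_continuousOn {Qe Qp : ℝ → Matrix I6 I6 ℝ} {M : ℝ → Matrix (Fin 3) (Fin 3) ℝ}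
    {s : Set ℝ}
    (hQe : ∀ i j, ContinuousOn (fun t => Qe t i j) s)
    (hQp : ∀ i j, ContinuousOn (fun t => Qp t i j) s)
    (hM : ∀ i j, ContinuousOn (fun t => M t i j) s) (i j : I12) :
    ContinuousOn (fun t => Qfrak (Qe t) (Qp t) (M t) i j) s := by
  have hMf : ∀ i j, ContinuousOn (fun t => Mfrak (M t) i j) s := by
    rintro (i | i) (j | j) <;> simp [Mfrak, hM, continuousOn_const]
  rcases i with i | i <;> rcases j with j | j <;> simp only [Qfrak, fromBlocks_apply₁₁,
    fromBlocks_apply₁₂, fromBlocks_apply₂₁, fromBlocks_apply₂₂, Matrix.sub_apply,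
    Matrix.neg_apply]
  · exact (hQe i j).sub (hMf i j)
  · exact hMf i j
  · exact hMf i j
  · exact (hQp i j).neg.sub (hMf i j)

/-- Saddle-point property of the feedback strategies
u_e* = −R_e⁻¹𝔅_eᵀSξ, u_p* = R_p⁻¹𝔅_pᵀSξ for the linear-quadratic pursuit-evasion game
in cislunar space, where S is a symmetric bounded solution of the indefinite matrix
Riccati differential equation with terminal condition S(tf) = 𝔔_f. -/
theorem lq_feedback_saddle_point (t0 tf : ℝ) (ht : t0 < tf)
    (A : ℝ → Matrix I6 I6 ℝ)
    (hA : ∀ i j, ContinuousOn (fun t => A t i j) (Set.Icc t0 tf))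
    (me mp : ℝ) (hme : 0 < me) (hmp : 0 < mp)
    (Qe Qp : ℝ → Matrix I6 I6 ℝ)
    (hQecont : ∀ i j, ContinuousOn (fun t => Qe t i j) (Set.Icc t0 tf))
    (hQpcont : ∀ i j, ContinuousOn (fun t => Qp t i j) (Set.Icc t0 tf))
    (hQe : ∀ t ∈ Set.Icc t0 tf, (Qe t).PosDef)
    (hQp : ∀ t ∈ Set.Icc t0 tf, (Qp t).PosDef)
    (Re Rp : ℝ → Matrix (Fin 3) (Fin 3) ℝ)
    (hRecont : ∀ i j, ContinuousOn (fun t => Re t i j) (Set.Icc t0 tf))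
    (hRpcont : ∀ i j, ContinuousOn (fun t => Rp t i j) (Set.Icc t0 tf))
    (hRe : ∀ t ∈ Set.Icc t0 tf, (Re t).PosDef)
    (hRp : ∀ t ∈ Set.Icc t0 tf, (Rp t).PosDef)
    (M : ℝ → Matrix (Fin 3) (Fin 3) ℝ)
    (hMcont : ∀ i j, ContinuousOn (fun t => M t i j) (Set.Icc t0 tf))
    (hM : ∀ t ∈ Set.Icc t0 tf, (M t).PosDef)
    (Fe Fp : Matrix I6 I6 ℝ) (hFe : Fe.PosDef) (hFp : Fp.PosDef)
    (Mf : Matrix (Fin 3) (Fin 3) ℝ) (hMf : Mf.PosDef)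
    (S : ℝ → Matrix I12 I12 ℝ)
    (hSsymm : ∀ t ∈ Set.Icc t0 tf, (S t).IsSymm)
    (hSbdd : ∃ C : ℝ, ∀ t ∈ Set.Icc t0 tf, ∀ i j, |S t i j| ≤ C)
    (hSode : ∀ t ∈ Set.Icc t0 tf, ∀ i j,
      HasDerivWithinAt (fun r => S r i j)
        (-((Abig (A t))ᵀ * S t + S t * Abig (A t) + Qfrak (Qe t) (Qp t) (M t)
            - S t * BeMat me * (Re t)⁻¹ * (BeMat me)ᵀ * S t
            + S t * BpMat mp * (Rp t)⁻¹ * (BpMat mp)ᵀ * S t) i j) (Set.Icc t0 tf) t)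
    (hStf : S tf = Qfrak Fe Fp Mf)
    (x0 : I12 → ℝ)
    (xo : ℝ → I12 → ℝ) (hxo0 : xo t0 = x0)
    (hxo : ∀ t ∈ Set.Icc t0 tf,
      HasDerivWithinAt xo
        (Abig (A t) *ᵥ xo t + BeMat me *ᵥ ueFb (Re t) me (S t) (xo t)
          + BpMat mp *ᵥ upFb (Rp t) mp (S t) (xo t)) (Set.Icc t0 tf) t) :
    let Qb : ℝ → Matrix I12 I12 ℝ := fun t => Qfrak (Qe t) (Qp t) (M t)
    let Jo : ℝ := costLQ t0 tf Qb (Qfrak Fe Fp Mf) Re Rp xo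
      (fun t => ueFb (Re t) me (S t) (xo t)) (fun t => upFb (Rp t) mp (S t) (xo t))
    -- (i) the evader's feedback guarantees at most J° against any continuous pursuer
    ((∀ upT : ℝ → Fin 3 → ℝ, (∀ i, ContinuousOn (fun t => upT t i) (Set.Icc t0 tf)) →
      ∀ xt : ℝ → I12 → ℝ, xt t0 = x0 →
      (∀ t ∈ Set.Icc t0 tf,
        HasDerivWithinAt xt
          (Abig (A t) *ᵥ xt t + BeMat me *ᵥ ueFb (Re t) me (S t) (xt t)
            + BpMat mp *ᵥ upT t) (Set.Icc t0 tf) t) →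
      costLQ t0 tf Qb (Qfrak Fe Fp Mf) Re Rp xt
        (fun t => ueFb (Re t) me (S t) (xt t)) upT ≤ Jo) ∧
    -- (ii) the pursuer's feedback guarantees at least J° against any continuous evader
    (∀ ueT : ℝ → Fin 3 → ℝ, (∀ i, ContinuousOn (fun t => ueT t i) (Set.Icc t0 tf)) →
      ∀ xh : ℝ → I12 → ℝ, xh t0 = x0 →
      (∀ t ∈ Set.Icc t0 tf,
        HasDerivWithinAt xh
          (Abig (A t) *ᵥ xh t + BeMat me *ᵥ ueT t
            + BpMat mp *ᵥ upFb (Rp t) mp (S t) (xh t)) (Set.Icc t0 tf) t) →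
      Jo ≤ costLQ t0 tf Qb (Qfrak Fe Fp Mf) Re Rp xh
        ueT (fun t => upFb (Rp t) mp (S t) (xh t)))) := by
  intro Qb Jo
  have hQb : ∀ i j, ContinuousOn (fun t => Qb t i j) (Icc t0 tf) :=
    Qfrak_continuousOn hQecont hQpcont hMcont
  have hSc : ∀ i j, ContinuousOn (fun t => S t i j) (Icc t0 tf) :=
    fun i j t h => (hSode t h i j).continuousWithinAt
  have hfe : ∀ x : ℝ → I12 → ℝ, ContinuousOn x (Icc t0 tf) →
      ContinuousOn (fun t => ueFb (Re t) me (S t) (x t)) (Icc t0 tf) := fun x hx =>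
    (gain_continuousOn hRecont hRe (BeMat me)ᵀ hSc hx).neg
  have hfp : ∀ x : ℝ → I12 → ℝ, ContinuousOn x (Icc t0 tf) →
      ContinuousOn (fun t => upFb (Rp t) mp (S t) (x t)) (Icc t0 tf) := fun x hx =>
    gain_continuousOn hRpcont hRp (BpMat mp)ᵀ hSc hx
  -- The negation in `hSode` acts on the entry, the one in `riccatiRhs` on the matrix.
  have hSode' : ∀ t ∈ Icc t0 tf, ∀ i j, HasDerivWithinAt (fun r => S r i j)
      (riccatiRhs (Abig (A t)) (Qb t) (S t) (BeMat me) (BpMat mp) (Re t) (Rp t) i j)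
      (Icc t0 tf) t := by
    intro t h i j
    rw [riccatiRhs, Matrix.neg_apply]
    exact hSode t h i j
  have key : ∀ (x : ℝ → I12 → ℝ) (u v : ℝ → Fin 3 → ℝ), x t0 = x0 →
      ContinuousOn u (Icc t0 tf) → ContinuousOn v (Icc t0 tf) →
      (∀ t ∈ Icc t0 tf, HasDerivWithinAt x
        (Abig (A t) *ᵥ x t + BeMat me *ᵥ u t + BpMat mp *ᵥ v t) (Icc t0 tf) t) →
      costLQ t0 tf Qb (Qfrak Fe Fp Mf) Re Rp x u v = x0 ⬝ᵥ S t0 *ᵥ x0 +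
        ∫ t in t0..tf, ((u t - ueFb (Re t) me (S t) (x t)) ⬝ᵥ
              Re t *ᵥ (u t - ueFb (Re t) me (S t) (x t))
            - (v t - upFb (Rp t) mp (S t) (x t)) ⬝ᵥ
              Rp t *ᵥ (v t - upFb (Rp t) mp (S t) (x t))) := by
    intro x u v h0 hu hv hx
    have hxc : ContinuousOn x (Icc t0 tf) := fun t h => (hx t h).continuousWithinAt
    rw [costLQ, ← hStf, ← h0]
    exact cost_eq ht hQb hRecont hRpcont hRe hRp hSsymm hSode' hu hv
      (fun _ => rfl) (fun _ => rfl) (hfe x hxc) (hfp x hxc) hx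
  have hxoc : ContinuousOn xo (Icc t0 tf) := fun t h => (hxo t h).continuousWithinAt
  have hJo : Jo = x0 ⬝ᵥ S t0 *ᵥ x0 := by
    have h := key xo _ _ hxo0 (hfe xo hxoc) (hfp xo hxoc) hxo
    simpa using h
  rw [hJo]
  constructor
  · intro upT hup xt h0 hx
    have hxc : ContinuousOn xt (Icc t0 tf) := fun t h => (hx t h).continuousWithinAt
    rw [key xt _ _ h0 (hfe xt hxc) (continuousOn_pi.2 hup) hx]
    have h := integral_square_nonneg ht hRp fun t => upT t - upFb (Rp t) mp (S t) (xt t)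
    simp only [sub_self, zero_dotProduct, zero_sub, intervalIntegral.integral_neg]
    linarith
  · intro ueT hue xh h0 hx
    have hxc : ContinuousOn xh (Icc t0 tf) := fun t h => (hx t h).continuousWithinAt
    rw [key xh _ _ h0 (continuousOn_pi.2 hue) (hfp xh hxc) hx]
    have h := integral_square_nonneg ht hRe fun t => ueT t - ueFb (Re t) me (S t) (xh t)
    simp only [sub_self, zero_dotProduct, sub_zero]
    linarith
end

section
/- Let n be a positive natural number and t0 < tf real numbers. For each λ ≥ 0 let f_λ : [t0,tf] × ℝ^n → ℝ^n and let f_∞ : [t0,tf] × ℝ^n → ℝ^n be continuous functions such that: (i) for every compact set C ⊆ ℝ^n there is a constant L_C with ‖f_λ(t,x) − f_λ(t,y)‖ ≤ L_C‖x − y‖ for all t ∈ [t0,tf], x, y ∈ C, and all λ ≥ 0, the same bound holding for f_∞; and (ii) f_λ → f_∞ as λ → ∞ uniformly on [t0,tf] × C for every compact C ⊆ ℝ^n. Suppose that for a given x_f ∈ ℝ^n the terminal value problem dx/dt = f_∞(t, x), x(tf) = x_f has a solution defined on all of [t0,tf]. Then there exists λ* ≥ 0 such that for every λ ≥ λ*,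 the terminal value problem dx/dt = f_λ(t, x), x(tf) = x_f has a unique solution defined on all of [t0,tf], and these solutions are bounded on [t0,tf] uniformly in λ ≥ λ*. -/
/-!
Fix a closed ball `B` of radius `R` around the origin containing a unit neighbourhood of the limiting
trajectory. Composing `f lam t` with the retraction `clamp R` onto `B` yields a bounded, globally
Lipschitz vector field, so Picard–Lindelöf solves the truncated terminal value problem on all of
`[t0, tf]` in one step (`exists_solution_clamp`). By Grönwall's inequality run backwards from `tf`
(`dist_le_of_terminal_eq`), the truncated solution stays within distance `1` of the limiting
trajectory as soon as `f lam` is close enough to `finf` on `B`. It therefore never leaves `B`, where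
the truncation is invisible, and so it solves the original problem and is bounded by `R`. Uniqueness
is the same Grönwall estimate with zero defect, on a ball containing both solutions.
-/

open Set

/-- Coordinatewise truncation to the box `[-R, R]ⁿ`. For the sup norm on `Fin n → ℝ` this is a
`1`-Lipschitz retraction onto the closed ball of radius `R` around `0`, when `0 ≤ R`. -/
def clamp {n : ℕ} (R : ℝ) (x : Fin n → ℝ) : Fin n → ℝ := fun i => max (-R) (min R (x i))

lemma clamp_mem {n : ℕ} {R : ℝ} (hR : 0 ≤ R) (x : Fin n → ℝ) :
    clamp R x ∈ Metric.closedBall (0 : Fin n → ℝ) R := by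
  rw [mem_closedBall_zero_iff, pi_norm_le_iff_of_nonneg hR]
  intro i
  rw [Real.norm_eq_abs, abs_le]
  exact ⟨le_max_left _ _, max_le (by linarith) (min_le_left _ _)⟩

lemma clamp_eq_self {n : ℕ} {R : ℝ} {x : Fin n → ℝ} (hx : ‖x‖ ≤ R) : clamp R x = x := by
  funext i
  have h := abs_le.1 ((norm_le_pi_norm x i).trans hx)
  simp only [clamp]
  rw [min_eq_right h.2, max_eq_right h.1]

lemma lipschitzWith_clamp {n : ℕ} (R : ℝ) : LipschitzWith 1 (clamp (n := n) R) := by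
  refine LipschitzWith.of_dist_le_mul fun x y => ?_
  rw [NNReal.coe_one, one_mul, dist_pi_le_iff dist_nonneg]
  intro i
  have h : LipschitzWith 1 fun s : ℝ => max (-R) (min R s) :=
    (LipschitzWith.id.const_min R).const_max (-R)
  have h' := h.dist_le_mul (x i) (y i)
  rw [NNReal.coe_one, one_mul] at h'
  exact h'.trans (dist_le_pi_dist x y i)

/-- Truncating the state makes the vector field bounded and globally Lipschitz, so that the terminal
value problem is solvable on the whole interval. -/
lemma exists_solution_clamp {n : ℕ} {a b R : ℝ} {K : NNReal} (hab : a ≤ b) (hR : 0 ≤ R)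
    {g : ℝ → (Fin n → ℝ) → (Fin n → ℝ)}
    (hg : ContinuousOn (fun p : ℝ × (Fin n → ℝ) => g p.1 p.2) (Icc a b ×ˢ univ))
    (hK : ∀ t ∈ Icc a b, LipschitzOnWith K (g t) (Metric.closedBall 0 R)) (xb : Fin n → ℝ) :
    ∃ x : ℝ → Fin n → ℝ, x b = xb ∧
      ∀ t ∈ Icc a b, HasDerivWithinAt x (g t (clamp R (x t))) (Icc a b) t := by
  obtain ⟨M, hM⟩ := (isCompact_Icc.prod (isCompact_closedBall (0 : Fin n → ℝ) R)
    ).exists_bound_of_continuousOn (hg.mono (prod_mono_right (subset_univ _)))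
  -- Since the field is bounded on the whole space, the Picard ball may have radius `M * (b - a)`.
  have hPL : IsPicardLindelof (fun t x => g t (clamp R x)) (⟨b, hab, le_rfl⟩ : Icc a b) xb
      (M.toNNReal * (b - a).toNNReal) 0 M.toNNReal K :=
    { lipschitzOnWith := fun t ht => by
        have h := (hK t ht).comp (lipschitzWith_clamp R).lipschitzOnWith
          (fun x _ => clamp_mem hR x : MapsTo (clamp R) univ _)
        rw [mul_one] at h
        exact h.mono (subset_univ _)
      continuousOn := fun x _ => hg.comp (f := fun t => (t, clamp R x)) (by fun_prop)
        fun t ht => ⟨ht, mem_univ _⟩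
      norm_le := fun t ht x _ => (hM (t, clamp R x) ⟨ht, clamp_mem hR x⟩).trans
        (Real.le_coe_toNNReal M)
      mul_max_le := by simp [hab] }
  exact hPL.exists_eq_forall_mem_Icc_hasDerivWithinAt₀

/-- Grönwall's inequality backwards in time: an exact solution `x` and an `ε`-approximate solution
`y` with the same terminal value remain close on the whole interval. -/
lemma dist_le_of_terminal_eq {E : Type*} [NormedAddCommGroup E] [NormedSpace ℝ E]
    {v : ℝ → E → E} {x y y' : ℝ → E} {s : Set E} {K : NNReal} {a b ε : ℝ} (hε : 0 ≤ ε)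
    (hv : ∀ t ∈ Icc a b, LipschitzOnWith K (v t) s)
    (hx : ∀ t ∈ Icc a b, HasDerivWithinAt x (v t (x t)) (Icc a b) t)
    (hxs : ∀ t ∈ Icc a b, x t ∈ s)
    (hy : ∀ t ∈ Icc a b, HasDerivWithinAt y (y' t) (Icc a b) t)
    (hy' : ∀ t ∈ Icc a b, dist (y' t) (v t (y t)) ≤ ε)
    (hys : ∀ t ∈ Icc a b, y t ∈ s)
    (hb : x b = y b) :
    ∀ t ∈ Icc a b, dist (x t) (y t) ≤ gronwallBound 0 K ε (b - a) := by
  have hmem : ∀ t ∈ Icc (-b) (-a), -t ∈ Icc a b :=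
    fun t ht => ⟨le_neg.mp ht.2, neg_le.mp ht.1⟩
  have hrev : ∀ {z z' : ℝ → E}, (∀ t ∈ Icc a b, HasDerivWithinAt z (z' t) (Icc a b) t) →
      ∀ t ∈ Icc (-b) (-a),
        HasDerivWithinAt (fun t => z (-t)) (-z' (-t)) (Icc (-b) (-a)) t := by
    intro z z' hz t ht
    simpa [Function.comp_def] using (hz (-t) (hmem t ht)).scomp t
      (hasDerivAt_neg t).hasDerivWithinAt hmem
  have hright : ∀ {z : ℝ → E} {z' : E} {t : ℝ}, t ∈ Ico (-b) (-a) →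
      HasDerivWithinAt z z' (Icc (-b) (-a)) t → HasDerivWithinAt z z' (Ici t) t :=
    fun ht h => h.mono_of_mem_nhdsWithin
      (Filter.mem_of_superset (Icc_mem_nhdsGE ht.2) (Icc_subset_Icc_left ht.1))
  have key := dist_le_of_approx_trajectories_ODE_of_mem
    (v := fun t p => -v (-t) p) (s := fun _ => s) (K := K) (δ := 0) (εf := 0) (εg := ε)
    (f := fun t => x (-t)) (g := fun t => y (-t))
    (f' := fun t => -v (-t) (x (-t))) (g' := fun t => -y' (-t)) (a := -b) (b := -a)
    (fun t ht => (hv (-t) (hmem t (Ico_subset_Icc_self ht))).neg)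
    (fun t ht => (hrev hx t ht).continuousWithinAt)
    (fun t ht => hright ht (hrev hx t (Ico_subset_Icc_self ht)))
    (fun t _ => (dist_self _).le)
    (fun t ht => hxs _ (hmem t (Ico_subset_Icc_self ht)))
    (fun t ht => (hrev hy t ht).continuousWithinAt)
    (fun t ht => hright ht (hrev hy t (Ico_subset_Icc_self ht)))
    (fun t ht => by
      simpa only [dist_neg_neg] using hy' _ (hmem t (Ico_subset_Icc_self ht)))
    (fun t ht => hys _ (hmem t (Ico_subset_Icc_self ht)))
    (by simp [hb])
  intro t ht
  have h := key (-t) ⟨neg_le_neg ht.2, neg_le_neg ht.1⟩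
  simp only [neg_neg, zero_add] at h
  exact h.trans (gronwallBound_mono le_rfl hε K.coe_nonneg (by linarith [ht.1]))

/-- Persistence of terminal value problems under uniform-on-compacts
convergence of the right-hand side as the regularization parameter λ → ∞: if the vector
fields f_λ (λ ≥ 0) and f_∞ are continuous, locally Lipschitz in the state uniformly in
t and λ, f_λ → f_∞ uniformly on [t0,tf] × C for every compact C, and the limiting
terminal value problem has a solution on all of [t0,tf], then for all sufficiently large
λ the regularized terminal value problem has a unique solution on [t0,tf], and these
solutions are bounded uniformly in λ. -/
theorem tvp_persistence_under_regularization (n : ℕ) (hn : 0 < n)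
    (t0 tf : ℝ) (ht : t0 < tf)
    (f : ℝ → ℝ → (Fin n → ℝ) → (Fin n → ℝ))
    (finf : ℝ → (Fin n → ℝ) → (Fin n → ℝ))
    (hfcont : ∀ lam ≥ (0 : ℝ),
      ContinuousOn (fun p : ℝ × (Fin n → ℝ) => f lam p.1 p.2)
        (Set.Icc t0 tf ×ˢ (Set.univ : Set (Fin n → ℝ))))
    (hfinfcont : ContinuousOn (fun p : ℝ × (Fin n → ℝ) => finf p.1 p.2)
        (Set.Icc t0 tf ×ˢ (Set.univ : Set (Fin n → ℝ))))
    (hlip : ∀ C : Set (Fin n → ℝ), IsCompact C → ∃ L : ℝ,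
      (∀ lam ≥ (0 : ℝ), ∀ t ∈ Set.Icc t0 tf, ∀ x ∈ C, ∀ y ∈ C,
        ‖f lam t x - f lam t y‖ ≤ L * ‖x - y‖) ∧
      (∀ t ∈ Set.Icc t0 tf, ∀ x ∈ C, ∀ y ∈ C,
        ‖finf t x - finf t y‖ ≤ L * ‖x - y‖))
    (hconv : ∀ C : Set (Fin n → ℝ), IsCompact C → ∀ ε > (0 : ℝ), ∃ Λ : ℝ,
      ∀ lam ≥ Λ, ∀ t ∈ Set.Icc t0 tf, ∀ x ∈ C, ‖f lam t x - finf t x‖ ≤ ε)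
    (xf : Fin n → ℝ)
    (hsol : ∃ xinf : ℝ → Fin n → ℝ, xinf tf = xf ∧
      ∀ t ∈ Set.Icc t0 tf,
        HasDerivWithinAt xinf (finf t (xinf t)) (Set.Icc t0 tf) t) :
    ∃ lamStar ≥ (0 : ℝ), ∃ C : ℝ, ∀ lam ≥ lamStar,
      ∃ x : ℝ → Fin n → ℝ,
        (x tf = xf ∧
          (∀ t ∈ Set.Icc t0 tf,
            HasDerivWithinAt x (f lam t (x t)) (Set.Icc t0 tf) t) ∧
          (∀ t ∈ Set.Icc t0 tf, ‖x t‖ ≤ C)) ∧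
        (∀ y : ℝ → Fin n → ℝ, y tf = xf →
          (∀ t ∈ Set.Icc t0 tf,
            HasDerivWithinAt y (f lam t (y t)) (Set.Icc t0 tf) t) →
          ∀ t ∈ Set.Icc t0 tf, y t = x t) := by
  obtain ⟨xinf, hxf, hxinf⟩ := hsol
  have hbdd : ∀ y : ℝ → Fin n → ℝ, ContinuousOn y (Icc t0 tf) →
      ∃ r : ℝ, 0 ≤ r ∧ ∀ t ∈ Icc t0 tf, ‖y t‖ ≤ r := fun y hy => by
    obtain ⟨r, hr⟩ := isCompact_Icc.exists_bound_of_continuousOn hy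
    exact ⟨max r 0, le_max_right _ _, fun t h => (hr t h).trans (le_max_left _ _)⟩
  have hlip' : ∀ R : ℝ, ∃ K : NNReal, ∀ lam ≥ (0 : ℝ), ∀ t ∈ Icc t0 tf,
      LipschitzOnWith K (f lam t) (Metric.closedBall 0 R) := fun R => by
    obtain ⟨L, hL, -⟩ := hlip _ (isCompact_closedBall (0 : Fin n → ℝ) R)
    refine ⟨L.toNNReal, fun lam hlam t h => LipschitzOnWith.of_dist_le_mul fun x hx y hy => ?_⟩
    rw [dist_eq_norm, dist_eq_norm]
    exact (hL lam hlam t h x hx y hy).trans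
      (mul_le_mul_of_nonneg_right (Real.le_coe_toNNReal L) (norm_nonneg _))
  obtain ⟨r, hr0, hr⟩ := hbdd xinf fun t h => (hxinf t h).continuousWithinAt
  obtain ⟨K, hK⟩ := hlip' (r + 1)
  -- A defect `ε` on the ball of radius `r + 1` moves solutions by at most `1`.
  obtain ⟨ε, hε, hεpos⟩ : ∃ ε : ℝ, gronwallBound 0 K ε (tf - t0) < 1 ∧ 0 < ε := by
    have hlim : Filter.Tendsto (fun ε => gronwallBound 0 K ε (tf - t0))
        (nhdsWithin 0 (Ioi 0)) (nhds 0) := by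
      have h := (gronwallBound_continuous_ε 0 K (tf - t0)).tendsto 0
      rw [gronwallBound_ε0_δ0] at h
      exact h.mono_left nhdsWithin_le_nhds
    exact ((hlim.eventually_lt_const one_pos).and self_mem_nhdsWithin).exists
  obtain ⟨Λ, hΛ⟩ := hconv _ (isCompact_closedBall (0 : Fin n → ℝ) (r + 1)) ε hεpos
  refine ⟨max Λ 0, le_max_right _ _, r + 1, fun lam hlam => ?_⟩
  have hlam0 : 0 ≤ lam := (le_max_right _ _).trans hlam
  have hR : 0 ≤ r + 1 := by linarith
  obtain ⟨x, hxtf, hx⟩ := exists_solution_clamp ht.le hR (hfcont lam hlam0) (hK lam hlam0) xf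
  have hclamp : ∀ t ∈ Icc t0 tf, clamp (r + 1) (xinf t) = xinf t := fun t h =>
    clamp_eq_self ((hr t h).trans (by linarith))
  have hclose := dist_le_of_terminal_eq (v := fun t p => f lam t (clamp (r + 1) p)) (s := univ)
    (K := K) hεpos.le
    (fun t h => by
      have h1 := (hK lam hlam0 t h).comp (lipschitzWith_clamp (r + 1)).lipschitzOnWith
        (fun p _ => clamp_mem hR p : MapsTo (clamp (r + 1)) univ _)
      rw [mul_one] at h1
      exact h1)
    hx (fun _ _ => mem_univ _) hxinf
    (fun t h => by
      rw [hclamp t h, dist_comm, dist_eq_norm]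
      refine hΛ lam ((le_max_left _ _).trans hlam) t h _ ?_
      rw [mem_closedBall_zero_iff]
      linarith [hr t h])
    (fun _ _ => mem_univ _) (hxtf.trans hxf.symm)
  have hxR : ∀ t ∈ Icc t0 tf, ‖x t‖ ≤ r + 1 := fun t h => by
    have h1 := hclose t h
    rw [dist_eq_norm] at h1
    linarith [norm_le_norm_add_norm_sub' (x t) (xinf t), hr t h]
  have hxsol : ∀ t ∈ Icc t0 tf, HasDerivWithinAt x (f lam t (x t)) (Icc t0 tf) t := fun t h => by
    simpa only [clamp_eq_self (hxR t h)] using hx t h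
  refine ⟨x, ⟨hxtf, hxsol, hxR⟩, fun y hytf hy t h => ?_⟩
  -- The competitor `y` may be large, so the Lipschitz constant is taken on a ball containing both.
  obtain ⟨q, -, hq⟩ := hbdd y fun t h => (hy t h).continuousWithinAt
  obtain ⟨K', hK'⟩ := hlip' (max q (r + 1))
  have huniq := dist_le_of_terminal_eq le_rfl (hK' lam hlam0) hy
    (fun t h => mem_closedBall_zero_iff.2 ((hq t h).trans (le_max_left _ _))) hxsol
    (fun t _ => (dist_self _).le)
    (fun t h => mem_closedBall_zero_iff.2 ((hxR t h).trans (le_max_right _ _)))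
    (hytf.trans hxtf.symm) t h
  rwa [gronwallBound_ε0_δ0, dist_le_zero] at huniq
end
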